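/- Let 0 < K < 1/3 and let α ∈ (0,1) satisfy (1−K)α > 2/3. Then for every δ > 0 there exist ε > 0 and C > 0 such that the following holds: if (v,L) is a smooth solution of the expansion-normalized Euler system on [1,∞) × ℝ, 2π-periodic in x, whose initial data at t = 1 satisfy |v̄(1)| + ‖(v(1,·), L(1,·))‖₍₂₎ < ε, then the mean velocity satisfies |v̄(t)| ≤ C · t^(−α(1−3K) + δ) for all t ≥ 1. -/

import Mathlib

open MeasureTheory

/-- Partial derivative in the time variable of a function of `(t, x)`. -/
noncomputable def pderivT (f : ℝ → ℝ → ℝ) (t x : ℝ) : ℝ := deriv (fun s => f s x) t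

/-- Partial derivative in the space variable of a function of `(t, x)`. -/
noncomputable def pderivX (f : ℝ → ℝ → ℝ) (t x : ℝ) : ℝ := deriv (fun y => f t y) x

/-- The `L²` norm of a function over one period `[0, 2π]`. -/
noncomputable def L2normCirc (g : ℝ → ℝ) : ℝ :=
  Real.sqrt (∫ x in (0:ℝ)..(2 * Real.pi), (g x) ^ 2)

/-- The norm `‖(v,L)‖₍₂₎ = ‖∂ₓv‖_{L²} + ‖∂ₓ²v‖_{L²} + ‖∂ₓL‖_{L²} + ‖∂ₓ²L‖_{L²}`
at time `t`. -/
noncomputable def sobolevNorm2 (v L : ℝ → ℝ → ℝ) (t : ℝ) : ℝ :=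
  L2normCirc (fun x => deriv (v t) x) + L2normCirc (fun x => deriv (deriv (v t)) x)
    + L2normCirc (fun x => deriv (L t) x) + L2normCirc (fun x => deriv (deriv (L t)) x)

/-- The mean velocity `v̄(t) = ∫₀^{2π} v(t,x) dx`. -/
noncomputable def meanVel (v : ℝ → ℝ → ℝ) (t : ℝ) : ℝ :=
  ∫ x in (0:ℝ)..(2 * Real.pi), v t x

/-- The expansion-normalized relativistic Euler system on `[1,∞) × ℝ` with expansion
exponent `α` and (squared) sound speed `K`. -/
def IsEulerSolution (α K : ℝ) (v L : ℝ → ℝ → ℝ) : Prop :=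
  ∀ t, 1 ≤ t → ∀ x : ℝ,
    (pderivT v t x =
      -(α * (1 - 3 * K) / t) * v t x
      - t ^ (-α) * ((1 - K) / (1 - K * (v t x) ^ 2)) * v t x * pderivX v t x
      - t ^ (-α) * (K / (1 + K)) * ((1 - (v t x) ^ 2) ^ 2 / (1 - K * (v t x) ^ 2))
          * pderivX L t x
      + α * (1 - K) * (1 - 3 * K) * (t ^ (-α) / (1 - K * (v t x) ^ 2)) * (v t x) ^ 3)
    ∧ (pderivT L t x =
      -((1 + K) / (1 - K * (v t x) ^ 2)) * t ^ (-α) * pderivX v t x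
      - ((1 - K) / (1 - K * (v t x) ^ 2)) * t ^ (-α) * v t x * pderivX L t x
      + α * (1 + K) * (1 - 3 * K) * (t ^ (-α) / (1 - K * (v t x) ^ 2)) * (v t x) ^ 2)

section Helpers
open Set Filter Topology
open scoped ContDiff

/-- Smoothness on the time slab `[1,T] × ℝ`. -/
def Sm (T : ℝ) (f : ℝ → ℝ → ℝ) : Prop :=
  ContDiffOn ℝ (⊤ : ℕ∞) (fun p : ℝ × ℝ => f p.1 p.2) (Icc 1 T ×ˢ univ)

lemma slab_unique {T : ℝ} (hT : 1 < T) : UniqueDiffOn ℝ (Icc 1 T ×ˢ (univ : Set ℝ)) :=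
  (uniqueDiffOn_Icc hT).prod uniqueDiffOn_univ

lemma slab_nhds {T t x : ℝ} (ht : t ∈ Ioo 1 T) : Icc 1 T ×ˢ (univ : Set ℝ) ∈ 𝓝 (t, x) :=
  prod_mem_nhds (Icc_mem_nhds ht.1 ht.2) univ_mem

lemma Sm.hasDerivAt_x_aux {T : ℝ} {f : ℝ → ℝ → ℝ} (hf : Sm T f) {t : ℝ}
    (ht : t ∈ Icc 1 T) (x : ℝ) :
    HasDerivAt (fun y => f t y)
      (fderivWithin ℝ (fun p : ℝ × ℝ => f p.1 p.2) (Icc 1 T ×ˢ univ) (t, x) (0, 1)) x := by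
  have h1 : HasFDerivWithinAt (fun p : ℝ × ℝ => f p.1 p.2) _ (Icc 1 T ×ˢ univ) (t, x) :=
    ((hf.differentiableOn (by simp)) (t, x) ⟨ht, mem_univ _⟩).hasFDerivWithinAt
  have h2 : HasDerivWithinAt (fun y : ℝ => ((t, y) : ℝ × ℝ)) ((0 : ℝ), (1 : ℝ)) univ x :=
    ((hasDerivAt_const x t).prodMk (hasDerivAt_id x)).hasDerivWithinAt
  have := h1.comp_hasDerivWithinAt x h2 (fun y _ => ⟨ht, mem_univ _⟩)
  simpa [Function.comp_def] using this

lemma Sm.hasDerivAt_x {T : ℝ} {f : ℝ → ℝ → ℝ} (hf : Sm T f) {t : ℝ}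
    (ht : t ∈ Icc 1 T) (x : ℝ) : HasDerivAt (fun y => f t y) (pderivX f t x) x :=
  (hf.hasDerivAt_x_aux ht x).differentiableAt.hasDerivAt

lemma Sm.pderivX {T : ℝ} (hT : 1 < T) {f : ℝ → ℝ → ℝ} (hf : Sm T f) : Sm T (pderivX f) := by
  have h : ContDiffOn ℝ (⊤ : ℕ∞) (fun p : ℝ × ℝ =>
      fderivWithin ℝ (fun p : ℝ × ℝ => f p.1 p.2) (Icc 1 T ×ˢ univ) p (0, 1))
      (Icc 1 T ×ˢ univ) :=
    (hf.fderivWithin (slab_unique hT) (by simp)).clm_apply contDiffOn_const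
  refine h.congr ?_
  rintro ⟨t, x⟩ ⟨ht, -⟩
  exact (hf.hasDerivAt_x_aux ht x).deriv

lemma Sm.contDiffAt {T : ℝ} {f : ℝ → ℝ → ℝ} (hf : Sm T f) {t : ℝ} (ht : t ∈ Ioo 1 T) (x : ℝ) :
    ContDiffAt ℝ (⊤ : ℕ∞) (fun p : ℝ × ℝ => f p.1 p.2) (t, x) :=
  ContDiffOn.contDiffAt hf (slab_nhds ht)

lemma Sm.hasDerivAt_t_aux {T : ℝ} {f : ℝ → ℝ → ℝ} (hf : Sm T f) {t : ℝ}
    (ht : t ∈ Ioo 1 T) (x : ℝ) :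
    HasDerivAt (fun s => f s x) (fderiv ℝ (fun p : ℝ × ℝ => f p.1 p.2) (t, x) (1, 0)) t := by
  have h1 := ((hf.contDiffAt ht x).differentiableAt (by simp)).hasFDerivAt
  have h2 : HasDerivAt (fun s : ℝ => ((s, x) : ℝ × ℝ)) ((1 : ℝ), (0 : ℝ)) t :=
    (hasDerivAt_id t).prodMk (hasDerivAt_const t x)
  simpa [Function.comp_def] using h1.comp_hasDerivAt t h2

lemma Sm.hasDerivAt_x_aux' {T : ℝ} {f : ℝ → ℝ → ℝ} (hf : Sm T f) {t : ℝ}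
    (ht : t ∈ Ioo 1 T) (x : ℝ) :
    HasDerivAt (fun y => f t y) (fderiv ℝ (fun p : ℝ × ℝ => f p.1 p.2) (t, x) (0, 1)) x := by
  have h1 := ((hf.contDiffAt ht x).differentiableAt (by simp)).hasFDerivAt
  have h2 : HasDerivAt (fun s : ℝ => ((t, s) : ℝ × ℝ)) ((0 : ℝ), (1 : ℝ)) x :=
    (hasDerivAt_const x t).prodMk (hasDerivAt_id x)
  simpa [Function.comp_def] using h1.comp_hasDerivAt x h2

lemma Sm.hasDerivAt_t {T : ℝ} {f : ℝ → ℝ → ℝ} (hf : Sm T f) {t : ℝ}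
    (ht : t ∈ Ioo 1 T) (x : ℝ) : HasDerivAt (fun s => f s x) (pderivT f t x) t :=
  (hf.hasDerivAt_t_aux ht x).differentiableAt.hasDerivAt

lemma Sm.pderivT_contOn {T : ℝ} {f : ℝ → ℝ → ℝ} (hf : Sm T f) :
    ContinuousOn (fun p : ℝ × ℝ => pderivT f p.1 p.2) (Ioo 1 T ×ˢ univ) := by
  have h : ContinuousOn (fun p : ℝ × ℝ => fderiv ℝ (fun p : ℝ × ℝ => f p.1 p.2) p (1, 0))
      (Ioo 1 T ×ˢ univ) := by
    rintro ⟨t, x⟩ ⟨ht, -⟩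
    have : ContinuousAt (fderiv ℝ (fun p : ℝ × ℝ => f p.1 p.2)) (t, x) :=
      ((hf.contDiffAt ht x).fderiv_right (m := 0) (by simp)).continuousAt
    exact (this.clm_apply continuousAt_const).continuousWithinAt
  refine h.congr ?_
  rintro ⟨t, x⟩ ⟨ht, -⟩
  exact (hf.hasDerivAt_t_aux ht x).deriv

/-- Mixed partials commute: the time derivative of `f_x` is the space derivative of `f_t`. -/
lemma Sm.hasDerivAt_mixed {T : ℝ} {f : ℝ → ℝ → ℝ} (hf : Sm T f) {t : ℝ}
    (ht : t ∈ Ioo 1 T) (x : ℝ) :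
    HasDerivAt (fun y => pderivT f t y) (pderivT (_root_.pderivX f) t x) x := by
  set F : ℝ × ℝ → ℝ := fun p => f p.1 p.2 with hF
  have hc := hf.contDiffAt ht x
  have hd : DifferentiableAt ℝ (fderiv ℝ F) (t, x) :=
    (hc.fderiv_right (m := 1) (WithTop.coe_le_coe.2 le_top)).differentiableAt (by simp)
  have hsym : IsSymmSndFDerivAt ℝ F (t, x) := hc.isSymmSndFDerivAt (by simpa using WithTop.coe_le_coe.2 (le_top : (2 : ℕ∞) ≤ ⊤))
  have e1 : HasDerivAt (fun y => fderiv ℝ F (t, y) (1, 0))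
      (fderiv ℝ (fderiv ℝ F) (t, x) (0, 1) (1, 0)) x := by
    have h2 : HasDerivAt (fun s : ℝ => ((t, s) : ℝ × ℝ)) ((0 : ℝ), (1 : ℝ)) x :=
      (hasDerivAt_const x t).prodMk (hasDerivAt_id x)
    have := hd.hasFDerivAt.comp_hasDerivAt x h2
    simpa using this.clm_apply (hasDerivAt_const x ((1 : ℝ), (0 : ℝ)))
  have e2 : HasDerivAt (fun s => fderiv ℝ F (s, x) (0, 1))
      (fderiv ℝ (fderiv ℝ F) (t, x) (1, 0) (0, 1)) t := by
    have h2 : HasDerivAt (fun s : ℝ => ((s, x) : ℝ × ℝ)) ((1 : ℝ), (0 : ℝ)) t :=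
      (hasDerivAt_id t).prodMk (hasDerivAt_const t x)
    have := hd.hasFDerivAt.comp_hasDerivAt t h2
    simpa using this.clm_apply (hasDerivAt_const t ((0 : ℝ), (1 : ℝ)))
  have e3 : pderivT (_root_.pderivX f) t x = fderiv ℝ (fderiv ℝ F) (t, x) (1, 0) (0, 1) := by
    refine HasDerivAt.deriv (e2.congr_of_eventuallyEq ?_)
    filter_upwards [Ioo_mem_nhds ht.1 ht.2] with s hs
    exact (hf.hasDerivAt_x_aux' hs x).deriv
  rw [e3, hsym.eq]
  refine e1.congr_of_eventuallyEq (Eventually.of_forall fun y => ?_)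
  exact (hf.hasDerivAt_t_aux ht y).deriv

lemma Sm.contOn {T : ℝ} {f : ℝ → ℝ → ℝ} (hf : Sm T f) :
    ContinuousOn (fun p : ℝ × ℝ => f p.1 p.2) (Icc 1 T ×ˢ univ) := ContDiffOn.continuousOn hf

lemma Sm.cont_x {T : ℝ} {f : ℝ → ℝ → ℝ} (hf : Sm T f) {t : ℝ} (ht : t ∈ Icc 1 T) :
    Continuous (fun x => f t x) :=
  continuous_iff_continuousAt.2 fun x => (hf.hasDerivAt_x ht x).continuousAt

lemma Sm.add {T : ℝ} {f g : ℝ → ℝ → ℝ} (hf : Sm T f) (hg : Sm T g) :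
    Sm T (fun t x => f t x + g t x) := ContDiffOn.add hf hg
lemma Sm.mul {T : ℝ} {f g : ℝ → ℝ → ℝ} (hf : Sm T f) (hg : Sm T g) :
    Sm T (fun t x => f t x * g t x) := ContDiffOn.mul hf hg
lemma Sm.pow {T : ℝ} {f : ℝ → ℝ → ℝ} (hf : Sm T f) (n : ℕ) :
    Sm T (fun t x => f t x ^ n) := ContDiffOn.pow hf n
lemma Sm.const_mul {T : ℝ} {f : ℝ → ℝ → ℝ} (c : ℝ) (hf : Sm T f) :
    Sm T (fun t x => c * f t x) := ContDiffOn.mul contDiffOn_const hf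

/-- A continuous function on the slab has a continuous integral over the period. -/
lemma contOn_integral {T : ℝ} (hT : 1 < T) {f : ℝ → ℝ → ℝ}
    (hf : ContinuousOn (fun p : ℝ × ℝ => f p.1 p.2) (Icc 1 T ×ˢ univ)) :
    ContinuousOn (fun t => ∫ x in (0:ℝ)..(2 * Real.pi), f t x) (Icc 1 T) := by
  have hcl : ∀ t, max 1 (min t T) ∈ Icc 1 T := fun t =>
    ⟨le_max_left _ _, max_le hT.le (min_le_right _ _)⟩
  have hg : Continuous (fun p : ℝ × ℝ => f (max 1 (min p.1 T)) p.2) := by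
    have : Continuous (fun p : ℝ × ℝ => (max 1 (min p.1 T), p.2)) := by fun_prop
    exact hf.comp_continuous this (fun p => ⟨hcl _, mem_univ _⟩)
  have h := intervalIntegral.continuous_parametric_intervalIntegral_of_continuous'
    (μ := MeasureTheory.volume) (f := fun t x => f (max 1 (min t T)) x) hg 0 (2 * Real.pi)
  refine h.continuousOn.congr ?_
  intro t ht
  simp only [min_eq_left ht.2, max_eq_right ht.1]

lemma Sm.hasDerivAt_integral {T : ℝ} {f : ℝ → ℝ → ℝ} (hf : Sm T f) {t : ℝ} (ht : t ∈ Ioo 1 T) :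
    HasDerivAt (fun t => ∫ x in (0:ℝ)..(2 * Real.pi), f t x)
      (∫ x in (0:ℝ)..(2 * Real.pi), pderivT f t x) t := by
  obtain ⟨r, hr, hrs⟩ := Metric.nhds_basis_closedBall.mem_iff.1 (Ioo_mem_nhds ht.1 ht.2)
  have hK : IsCompact (Metric.closedBall t r ×ˢ uIcc (0:ℝ) (2 * Real.pi)) :=
    (isCompact_closedBall t r).prod isCompact_uIcc
  obtain ⟨M, hM⟩ := hK.exists_bound_of_continuousOn
    (hf.pderivT_contOn.mono (prod_mono hrs (subset_univ _)))
  refine (intervalIntegral.hasDerivAt_integral_of_dominated_loc_of_deriv_le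
    (F := f) (F' := fun t x => pderivT f t x) (bound := fun _ => M)
    (s := Metric.closedBall t r)
    (Metric.closedBall_mem_nhds t hr) ?_ ?_ ?_ ?_ ?_ ?_).2
  · filter_upwards [Ioo_mem_nhds ht.1 ht.2] with s hs
    exact (hf.cont_x (Ioo_subset_Icc_self hs)).aestronglyMeasurable
  · exact (hf.cont_x (Ioo_subset_Icc_self ht)).intervalIntegrable _ _
  · have : Continuous (fun x => pderivT f t x) :=
      continuous_iff_continuousAt.2 fun x => (hf.hasDerivAt_mixed ht x).continuousAt
    exact this.aestronglyMeasurable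
  · refine Eventually.of_forall fun x hx s hs => ?_
    exact hM (s, x) ⟨hs, uIoc_subset_uIcc hx⟩
  · exact intervalIntegrable_const
  · refine Eventually.of_forall fun x _ s hs => ?_
    exact hf.hasDerivAt_t (hrs hs) x

/-- periodicity passes to `∂ₓ`. -/
lemma periodic_pderivX {f : ℝ → ℝ → ℝ} (h : ∀ t x, f t (x + 2 * Real.pi) = f t x) :
    ∀ t x, pderivX f t (x + 2 * Real.pi) = pderivX f t x := by
  intro t x
  unfold pderivX
  rw [← deriv_comp_add_const]
  simp [h]

lemma integral_deriv_periodic {φ φ' : ℝ → ℝ} (h : ∀ x, HasDerivAt φ (φ' x) x)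
    (hc : Continuous φ') (hp : φ (2 * Real.pi) = φ 0) :
    ∫ x in (0:ℝ)..(2 * Real.pi), φ' x = 0 := by
  rw [intervalIntegral.integral_eq_sub_of_hasDerivAt (fun x _ => h x) (hc.intervalIntegrable _ _),
    hp, sub_self]

lemma two_pi_lt : 2 * Real.pi < 7 := by linarith [Real.pi_lt_d2]

/-- Sobolev and Poincare on the circle. -/
lemma sup_sq_le {φ φ' φ'' : ℝ → ℝ} (h : ∀ x, HasDerivAt φ (φ' x) x)
    (h' : ∀ x, HasDerivAt φ' (φ'' x) x) (hc : Continuous φ'')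
    (hp : Function.Periodic φ (2 * Real.pi)) (hp' : Function.Periodic φ' (2 * Real.pi)) (x : ℝ) :
    φ' x ^ 2 ≤ 7 * ∫ x in (0:ℝ)..(2 * Real.pi), φ'' x ^ 2 := by
  have hpi : (0:ℝ) < 2 * Real.pi := Real.two_pi_pos
  obtain ⟨z, hz, hzx⟩ := hp'.exists_mem_Ico₀ hpi x
  rw [hzx]
  obtain ⟨w, hw, hw0⟩ := exists_hasDerivAt_eq_zero (f := φ) (f' := φ') hpi
    (fun x _ => (h x).continuousAt.continuousWithinAt) (by simpa using (hp 0).symm)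
    (fun x _ => h x)
  set c := |φ' z| with hcdef
  have hI : ∀ a b, IntervalIntegrable (fun x => |φ'' x|) MeasureTheory.volume a b :=
    fun a b => hc.abs.intervalIntegrable _ _
  have h1 : c ≤ ∫ x in (0:ℝ)..(2 * Real.pi), |φ'' x| := by
    have e : φ' z = ∫ x in w..z, φ'' x := by
      rw [intervalIntegral.integral_eq_sub_of_hasDerivAt (fun x _ => h' x)
        (hc.intervalIntegrable _ _), hw0, sub_zero]
    rw [hcdef, e]
    refine (intervalIntegral.norm_integral_le_abs_integral_norm (f := φ'')).trans ?_
    simp only [Real.norm_eq_abs]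
    rcases le_total w z with hwz | hwz
    · rw [abs_of_nonneg (intervalIntegral.integral_nonneg hwz fun _ _ => abs_nonneg _)]
      exact intervalIntegral.integral_mono_interval hw.1.le hwz hz.2.le
        (Eventually.of_forall fun _ => abs_nonneg _) (hI _ _)
    · rw [intervalIntegral.integral_symm, abs_neg,
        abs_of_nonneg (intervalIntegral.integral_nonneg hwz fun _ _ => abs_nonneg _)]
      exact intervalIntegral.integral_mono_interval hz.1 hwz hw.2.le
        (Eventually.of_forall fun _ => abs_nonneg _) (hI _ _)
  have hI2 : IntervalIntegrable (fun x => φ'' x ^ 2) MeasureTheory.volume 0 (2 * Real.pi) :=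
    (hc.pow 2).intervalIntegrable _ _
  set l := c / (2 * Real.pi) with hl
  have h2 : 2 * l * ∫ x in (0:ℝ)..(2 * Real.pi), |φ'' x| ≤
      (∫ x in (0:ℝ)..(2 * Real.pi), φ'' x ^ 2) + 2 * Real.pi * l ^ 2 := by
    have : ∫ x in (0:ℝ)..(2 * Real.pi), 2 * l * |φ'' x| ≤
        ∫ x in (0:ℝ)..(2 * Real.pi), (φ'' x ^ 2 + l ^ 2) := by
      refine intervalIntegral.integral_mono_on hpi.le ((hI _ _).const_mul _)
        (((hc.pow 2).add continuous_const).intervalIntegrable _ _) ?_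
      intro x _
      nlinarith [sq_nonneg (|φ'' x| - l), sq_abs (φ'' x)]
    rw [intervalIntegral.integral_const_mul, intervalIntegral.integral_add
      hI2 intervalIntegrable_const] at this
    simpa using this
  have hl0 : 0 ≤ l := by positivity
  have hcl : c = l * (2 * Real.pi) := by rw [hl]; field_simp
  have h3 : 2 * l * c ≤ 2 * l * ∫ x in (0:ℝ)..(2 * Real.pi), |φ'' x| :=
    mul_le_mul_of_nonneg_left h1 (by positivity)
  have hc2 : φ' z ^ 2 = c ^ 2 := (sq_abs _).symm
  have h4 : l ^ 2 * (2 * Real.pi) ≤ ∫ x in (0:ℝ)..(2 * Real.pi), φ'' x ^ 2 := by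
    rw [hcl] at h3; nlinarith
  rw [hc2, hcl]
  have h5 : 0 ≤ l ^ 2 * (2 * Real.pi) := by positivity
  calc (l * (2 * Real.pi)) ^ 2 = (2 * Real.pi) * (l ^ 2 * (2 * Real.pi)) := by ring
    _ ≤ 7 * (l ^ 2 * (2 * Real.pi)) := mul_le_mul_of_nonneg_right two_pi_lt.le h5
    _ ≤ _ := by linarith

/-- A function is bounded by its mean and its derivative. -/
lemma sup_le_mean {φ φ' : ℝ → ℝ} (h : ∀ x, HasDerivAt φ (φ' x) x)
    (hp : Function.Periodic φ (2 * Real.pi)) {B : ℝ} (hB : ∀ x, |φ' x| ≤ B) (x : ℝ) :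
    |φ x| ≤ |∫ x in (0:ℝ)..(2 * Real.pi), φ x| + 7 * B := by
  have hpi : (0:ℝ) < 2 * Real.pi := Real.two_pi_pos
  have hB0 : 0 ≤ B := (abs_nonneg _).trans (hB 0)
  obtain ⟨z, hz, hzx⟩ := hp.exists_mem_Ico₀ hpi x
  rw [hzx]
  have hcont : Continuous φ := continuous_iff_continuousAt.2 fun x => (h x).continuousAt
  have e : (2 * Real.pi) * φ z - ∫ x in (0:ℝ)..(2 * Real.pi), φ x =
      ∫ x in (0:ℝ)..(2 * Real.pi), (φ z - φ x) := by
    rw [intervalIntegral.integral_sub intervalIntegrable_const (hcont.intervalIntegrable _ _)]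
    simp
  have hb : ‖∫ x in (0:ℝ)..(2 * Real.pi), (φ z - φ x)‖ ≤ (7 * B) * |2 * Real.pi - 0| := by
    refine intervalIntegral.norm_integral_le_of_norm_le_const ?_
    intro y hy
    rw [uIoc_of_le hpi.le] at hy
    have := Convex.norm_image_sub_le_of_norm_hasDerivWithin_le (f := φ) (f' := φ') (C := B)
      (s := univ) (x := y) (y := z) (fun x _ => (h x).hasDerivWithinAt) (fun x _ => hB x)
      convex_univ (mem_univ _) (mem_univ _)
    refine this.trans ?_
    have : ‖z - y‖ ≤ 7 := by
      rw [Real.norm_eq_abs, abs_le]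
      constructor <;> linarith [hz.1, hz.2, hy.1, hy.2, two_pi_lt]
    nlinarith
  rw [← e, Real.norm_eq_abs, sub_zero, abs_of_pos hpi] at hb
  have h1 : 1 ≤ 2 * Real.pi := by linarith [Real.pi_gt_three]
  have h3 : |(2 * Real.pi) * φ z| ≤ |∫ x in (0:ℝ)..(2 * Real.pi), φ x| + 7 * B * (2 * Real.pi) := by
    have := abs_sub_abs_le_abs_sub ((2 * Real.pi) * φ z) (∫ x in (0:ℝ)..(2 * Real.pi), φ x)
    linarith
  rw [abs_mul, abs_of_pos hpi] at h3
  have h4 : |∫ x in (0:ℝ)..(2 * Real.pi), φ x| ≤ (2 * Real.pi) * |∫ x in (0:ℝ)..(2 * Real.pi), φ x| :=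
    le_mul_of_one_le_left (abs_nonneg _) h1
  have : (2 * Real.pi) * |φ z| ≤ (2 * Real.pi) * (|∫ x in (0:ℝ)..(2 * Real.pi), φ x| + 7 * B) := by
    linarith
  exact le_of_mul_le_mul_left this hpi

/-- Structural hypotheses on the coefficients of the symmetrized system. -/
structure Coef (a b g h1 h2 : ℝ → ℝ) (s M : ℝ) : Prop where
  sa : ContDiff ℝ (⊤ : ℕ∞) a
  sb : ContDiff ℝ (⊤ : ℕ∞) b
  sg : ContDiff ℝ (⊤ : ℕ∞) g
  sh1 : ContDiff ℝ (⊤ : ℕ∞) h1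
  sh2 : ContDiff ℝ (⊤ : ℕ∞) h2
  a1 : ∀ y, |y| ≤ 1 → |deriv a y| ≤ M
  a2 : ∀ y, |y| ≤ 1 → |deriv (deriv a) y| ≤ M
  b0 : ∀ y, |y| ≤ 1 → |b y - s| ≤ M * |y|
  b1 : ∀ y, |y| ≤ 1 → |deriv b y| ≤ M
  b2 : ∀ y, |y| ≤ 1 → |deriv (deriv b) y| ≤ M
  g1 : ∀ y, |y| ≤ 1 → |deriv g y| ≤ M * |y|
  g2 : ∀ y, |y| ≤ 1 → |deriv (deriv g) y| ≤ M
  h11 : ∀ y, |y| ≤ 1 → |deriv h1 y| ≤ M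
  h11' : ∀ y, 1 ≤ deriv h1 y
  h12 : ∀ y, |y| ≤ 1 → |deriv (deriv h1) y| ≤ M
  h21 : ∀ y, |y| ≤ 1 → |deriv h2 y| ≤ M * |y|
  h22 : ∀ y, |y| ≤ 1 → |deriv (deriv h2) y| ≤ M

lemma smooth_d0 {f : ℝ → ℝ} (hf : ContDiff ℝ (⊤ : ℕ∞) f) (x : ℝ) :
    HasDerivAt f (deriv f x) x := (hf.differentiable (by simp) x).hasDerivAt
lemma smooth_deriv {f : ℝ → ℝ} (hf : ContDiff ℝ (⊤ : ℕ∞) f) :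
    ContDiff ℝ (⊤ : ℕ∞) (deriv f) := (contDiff_infty_iff_deriv.1 hf).2

lemma quad_bd {k B X Y W : ℝ} (hk : |k| ≤ B) (hX : X ^ 2 + Y ^ 2 ≤ 2 * W) :
    k * X * Y ≤ B * W ∧ -(k * X * Y) ≤ B * W := by
  have h1 : |k * X * Y| ≤ B * W := by
    rw [mul_assoc, abs_mul]
    have : |X * Y| ≤ W := by
      rw [abs_mul]
      nlinarith [sq_nonneg (|X| - |Y|), sq_abs X, sq_abs Y]
    exact mul_le_mul hk this (abs_nonneg _) ((abs_nonneg _).trans hk)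
  exact ⟨(le_abs_self _).trans h1, (neg_le_abs _).trans h1⟩

set_option maxHeartbeats 1000000 in
/-- Pointwise bound for the remainder of the energy density. -/
lemma RE_bound {a1 a2 b1 b2 g1 g2 h11 h12 h21 h22 M N β t τ p q P Q : ℝ}
    (hM : 1 ≤ M) (hN0 : 0 ≤ N) (hN : N ≤ 1) (hβ : 0 < β) (hβ1 : β ≤ 1) (ht : 1 ≤ t)
    (hτ : 1 / t ≤ τ)
    (hp : |p| ≤ N) (hq : |q| ≤ N)
    (ha1 : |a1| ≤ M) (ha2 : |a2| ≤ M) (hb1 : |b1| ≤ M) (hb2 : |b2| ≤ M)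
    (hg1 : |g1| ≤ M * N) (hg2 : |g2| ≤ M) (hh11' : 1 ≤ h11) (hh12 : |h12| ≤ M)
    (hh21 : |h21| ≤ M * N) (hh22 : |h22| ≤ M) :
    τ * (1 / 2 * a1 * p * (P ^ 2 + Q ^ 2) + b1 * p * P * Q)
      - τ * P * (3 * a1 * p * P + a2 * p ^ 3 + 2 * b1 * p * Q + b1 * P * q + b2 * p ^ 2 * q)
      - τ * Q * (3 * b1 * p * P + b2 * p ^ 3 + 2 * a1 * p * Q + a2 * p ^ 2 * q + a1 * P * q)
      + (-(β / t) * h12 + τ * h22) * p ^ 2 * P + (-(β / t) * h11 + τ * h21) * P ^ 2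
      + τ * Q * (g2 * p ^ 2 + g1 * P)
    ≤ -(β / t) * P ^ 2 + 30 * M * (τ * N) * (P ^ 2 + Q ^ 2 + p ^ 2 + q ^ 2) := by
  have ht0 : 0 < t := by linarith
  have hM0 : 0 ≤ M := by linarith
  have hτ0 : 0 ≤ τ := le_trans (by positivity) hτ
  set W := P ^ 2 + Q ^ 2 + p ^ 2 + q ^ 2 with hW
  have key : ∀ c n : ℝ, |c| ≤ M → |n| ≤ N → |c * n| ≤ M * N := fun c n hc hn => by
    rw [abs_mul]; exact mul_le_mul hc hn (abs_nonneg _) hM0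
  have hpp : |p * p| ≤ N := by
    rw [abs_mul]; nlinarith [abs_nonneg p]
  have hPP : P ^ 2 + P ^ 2 ≤ 2 * W := by rw [hW]; nlinarith [sq_nonneg Q, sq_nonneg p, sq_nonneg q]
  have hQQ : Q ^ 2 + Q ^ 2 ≤ 2 * W := by rw [hW]; nlinarith [sq_nonneg P, sq_nonneg p, sq_nonneg q]
  have hPQ : P ^ 2 + Q ^ 2 ≤ 2 * W := by
    rw [hW]; nlinarith [sq_nonneg P, sq_nonneg Q, sq_nonneg p, sq_nonneg q]
  have hpP : p ^ 2 + P ^ 2 ≤ 2 * W := by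
    rw [hW]; nlinarith [sq_nonneg P, sq_nonneg Q, sq_nonneg p, sq_nonneg q]
  have hpQ : p ^ 2 + Q ^ 2 ≤ 2 * W := by
    rw [hW]; nlinarith [sq_nonneg P, sq_nonneg Q, sq_nonneg p, sq_nonneg q]
  have hqP : q ^ 2 + P ^ 2 ≤ 2 * W := by
    rw [hW]; nlinarith [sq_nonneg P, sq_nonneg Q, sq_nonneg p, sq_nonneg q]
  have hqQ : q ^ 2 + Q ^ 2 ≤ 2 * W := by
    rw [hW]; nlinarith [sq_nonneg P, sq_nonneg Q, sq_nonneg p, sq_nonneg q]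
  have hW0 : 0 ≤ W := by positivity
  clear_value W
  clear hW
  have hh12' : |h12 * p| ≤ M * N := key _ _ hh12 hp
  have e0 : -(β / t) * h12 * p ^ 2 * P ≤ τ * (M * N * W) := by
    have h1 := (quad_bd hh12' hpP).2
    have h2 : (β / t) * (-(h12 * p * p * P)) ≤ (β / t) * (M * N * W) :=
      mul_le_mul_of_nonneg_left h1 (by positivity)
    have h3 : (β / t) * (M * N * W) ≤ τ * (M * N * W) := by
      refine mul_le_mul_of_nonneg_right ?_ (by positivity)
      refine le_trans ?_ hτ
      exact div_le_div_of_nonneg_right hβ1 ht0.le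
    linarith
  have e00 : -(β / t) * h11 * P ^ 2 ≤ -(β / t) * P ^ 2 := by
    have h0 : 0 ≤ (β / t) * P ^ 2 := by positivity
    have := mul_le_mul_of_nonneg_left hh11' h0
    linarith
  have f1 := (quad_bd (key _ _ ha1 hp) hPP).2
  have f1' := (quad_bd (key _ _ ha1 hp) hQQ).1
  have f1'' := (quad_bd (key _ _ ha1 hp) hQQ).2
  have f2 := (quad_bd (key _ _ hb1 hp) hPQ).2
  have f4 := (quad_bd (key _ _ ha2 hpp) hpP).2
  have f5 := (quad_bd (key _ _ hb1 hq) hPP).2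
  have f6 := (quad_bd (key _ _ hb2 hpp) hqP).2
  have f7 := (quad_bd (key _ _ hb2 hpp) hpQ).2
  have f8 := (quad_bd (key _ _ ha2 hpp) hqQ).2
  have f9 := (quad_bd (key _ _ ha1 hq) hPQ).2
  have f10 := (quad_bd (key _ _ hh22 hp) hpP).1
  have f11 := (quad_bd hh21 hPP).1
  have f12 := (quad_bd (key _ _ hg2 hp) hpQ).1
  have f13 := (quad_bd hg1 hPQ).1
  have hsum : (1 / 2 * a1 * p * (P ^ 2 + Q ^ 2) + b1 * p * P * Q)
      - P * (3 * a1 * p * P + a2 * p ^ 3 + 2 * b1 * p * Q + b1 * P * q + b2 * p ^ 2 * q)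
      - Q * (3 * b1 * p * P + b2 * p ^ 3 + 2 * a1 * p * Q + a2 * p ^ 2 * q + a1 * P * q)
      + h22 * p ^ 2 * P + h21 * P ^ 2 + Q * (g2 * p ^ 2 + g1 * P) ≤ 29 * (M * N * W) := by
    have : 0 ≤ M * N * W := by positivity
    linarith
  have := mul_le_mul_of_nonneg_left hsum hτ0
  linarith

set_option maxHeartbeats 1000000 in
/-- Pointwise bound for the remainder of the correction density. -/
lemma RX_bound {a1 b b1 g1 h11 h21 s M N β t τ p q P Q : ℝ}
    (hM : 1 ≤ M) (hN0 : 0 ≤ N) (hN : N ≤ 1) (hβ : 0 < β) (hβ1 : β ≤ 1) (ht : 1 ≤ t)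
    (hτ : 1 / t ≤ τ)
    (hp : |p| ≤ N) (hq : |q| ≤ N)
    (ha1 : |a1| ≤ M) (hb : |b - s| ≤ M * N) (hb1 : |b1| ≤ M)
    (hg1 : |g1| ≤ M * N) (hh11 : |h11| ≤ M) (hh21 : |h21| ≤ M * N) :
    -(τ * (b * Q ^ 2 - b * P ^ 2) + τ * (a1 * p ^ 2 * Q + b1 * p * q * Q)
      - τ * (b1 * p ^ 2 * P + a1 * p * q * P) - (-(β / t) * h11 + τ * h21) * p * Q
      + τ * g1 * p * P)
    ≤ -τ * s * (Q ^ 2 - P ^ 2) + (10 * M * (τ * N) + M / t) * (P ^ 2 + Q ^ 2 + p ^ 2 + q ^ 2) := by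
  have ht0 : 0 < t := by linarith
  have hM0 : 0 ≤ M := by linarith
  have hτ0 : 0 ≤ τ := le_trans (by positivity) hτ
  set W := P ^ 2 + Q ^ 2 + p ^ 2 + q ^ 2 with hW
  have key : ∀ c n : ℝ, |c| ≤ M → |n| ≤ N → |c * n| ≤ M * N := fun c n hc hn => by
    rw [abs_mul]; exact mul_le_mul hc hn (abs_nonneg _) hM0
  have hPP : P ^ 2 + P ^ 2 ≤ 2 * W := by rw [hW]; nlinarith [sq_nonneg Q, sq_nonneg p, sq_nonneg q]
  have hQQ : Q ^ 2 + Q ^ 2 ≤ 2 * W := by rw [hW]; nlinarith [sq_nonneg P, sq_nonneg p, sq_nonneg q]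
  have hpP : p ^ 2 + P ^ 2 ≤ 2 * W := by
    rw [hW]; nlinarith [sq_nonneg P, sq_nonneg Q, sq_nonneg p, sq_nonneg q]
  have hpQ : p ^ 2 + Q ^ 2 ≤ 2 * W := by
    rw [hW]; nlinarith [sq_nonneg P, sq_nonneg Q, sq_nonneg p, sq_nonneg q]
  have hqP : q ^ 2 + P ^ 2 ≤ 2 * W := by
    rw [hW]; nlinarith [sq_nonneg P, sq_nonneg Q, sq_nonneg p, sq_nonneg q]
  have hqQ : q ^ 2 + Q ^ 2 ≤ 2 * W := by
    rw [hW]; nlinarith [sq_nonneg P, sq_nonneg Q, sq_nonneg p, sq_nonneg q]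
  have hW0 : 0 ≤ W := by positivity
  clear_value W
  clear hW
  have e0 : -(β / t * h11 * p * Q) ≤ M / t * W := by
    have h1 := (quad_bd hh11 hpQ).2
    have h2 : (β / t) * (-(h11 * p * Q)) ≤ (β / t) * (M * W) :=
      mul_le_mul_of_nonneg_left h1 (by positivity)
    have h3 : (β / t) * (M * W) ≤ (1 / t) * (M * W) :=
      mul_le_mul_of_nonneg_right (div_le_div_of_nonneg_right hβ1 ht0.le) (by positivity)
    have h4 : (1 / t) * (M * W) = M / t * W := by ring
    linarith
  have f1 := (quad_bd hb hQQ).2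
  have f2 := (quad_bd hb hPP).1
  have f3 := (quad_bd (key _ _ ha1 hp) hpQ).2
  have f4 := (quad_bd (key _ _ hb1 hp) hqQ).2
  have f5 := (quad_bd (key _ _ hb1 hp) hpP).1
  have f6 := (quad_bd (key _ _ ha1 hp) hqP).1
  have f7 := (quad_bd hh21 hpQ).1
  have f8 := (quad_bd hg1 hpP).2
  have hsum : -((b - s) * Q ^ 2 - (b - s) * P ^ 2 + (a1 * p ^ 2 * Q + b1 * p * q * Q)
      - (b1 * p ^ 2 * P + a1 * p * q * P) - h21 * p * Q + g1 * p * P) ≤ 10 * (M * N * W) := by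
    have : 0 ≤ M * N * W := by positivity
    linarith
  have := mul_le_mul_of_nonneg_left hsum hτ0
  linarith

/-- The symmetrized system at a fixed time `t`. -/
structure SysAt (T t τ κ : ℝ) (a b g h1 h2 : ℝ → ℝ) (y l : ℝ → ℝ → ℝ) : Prop where
  ht : t ∈ Ioo 1 T
  hT : 1 < T
  sy : Sm T y
  sl : Sm T l
  py : ∀ t x, y t (x + 2 * Real.pi) = y t x
  pl : ∀ t x, l t (x + 2 * Real.pi) = l t x
  sa : ContDiff ℝ (⊤ : ℕ∞) a
  sb : ContDiff ℝ (⊤ : ℕ∞) b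
  sg : ContDiff ℝ (⊤ : ℕ∞) g
  sh1 : ContDiff ℝ (⊤ : ℕ∞) h1
  sh2 : ContDiff ℝ (⊤ : ℕ∞) h2
  ey : ∀ x, pderivT y t x = -τ * (a (y t x) * pderivX y t x + b (y t x) * pderivX l t x)
    + (κ * h1 (y t x) + τ * h2 (y t x))
  el : ∀ x, pderivT l t x = -τ * (b (y t x) * pderivX y t x + a (y t x) * pderivX l t x)
    + τ * g (y t x)

lemma integral_flux {e φ φ' R : ℝ → ℝ} (h : ∀ x, HasDerivAt φ (φ' x) x)
    (hc : Continuous φ') (hR : Continuous R) (hp : φ (2 * Real.pi) = φ 0)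
    (he : ∀ x, e x = φ' x + R x) :
    ∫ x in (0:ℝ)..(2 * Real.pi), e x = ∫ x in (0:ℝ)..(2 * Real.pi), R x := by
  simp only [he]
  rw [intervalIntegral.integral_add (hc.intervalIntegrable _ _) (hR.intervalIntegrable _ _),
    integral_deriv_periodic h hc hp, zero_add]

namespace SysAt
variable {T t τ κ : ℝ} {a b g h1 h2 : ℝ → ℝ} {y l : ℝ → ℝ → ℝ}

lemma dy (h : SysAt T t τ κ a b g h1 h2 y l) (x : ℝ) :
    HasDerivAt (fun x => y t x) (pderivX y t x) x := h.sy.hasDerivAt_x (Ioo_subset_Icc_self h.ht) x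
lemma dl (h : SysAt T t τ κ a b g h1 h2 y l) (x : ℝ) :
    HasDerivAt (fun x => l t x) (pderivX l t x) x := h.sl.hasDerivAt_x (Ioo_subset_Icc_self h.ht) x
lemma dy1 (h : SysAt T t τ κ a b g h1 h2 y l) (x : ℝ) :
    HasDerivAt (fun x => pderivX y t x) (pderivX (pderivX y) t x) x :=
  (h.sy.pderivX h.hT).hasDerivAt_x (Ioo_subset_Icc_self h.ht) x
lemma dl1 (h : SysAt T t τ κ a b g h1 h2 y l) (x : ℝ) :
    HasDerivAt (fun x => pderivX l t x) (pderivX (pderivX l) t x) x :=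
  (h.sl.pderivX h.hT).hasDerivAt_x (Ioo_subset_Icc_self h.ht) x
lemma dy2 (h : SysAt T t τ κ a b g h1 h2 y l) (x : ℝ) :
    HasDerivAt (fun x => pderivX (pderivX y) t x) (pderivX (pderivX (pderivX y)) t x) x :=
  ((h.sy.pderivX h.hT).pderivX h.hT).hasDerivAt_x (Ioo_subset_Icc_self h.ht) x
lemma dl2 (h : SysAt T t τ κ a b g h1 h2 y l) (x : ℝ) :
    HasDerivAt (fun x => pderivX (pderivX l) t x) (pderivX (pderivX (pderivX l)) t x) x :=
  ((h.sl.pderivX h.hT).pderivX h.hT).hasDerivAt_x (Ioo_subset_Icc_self h.ht) x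

lemma dcomp (h : SysAt T t τ κ a b g h1 h2 y l) {f : ℝ → ℝ} (hf : ContDiff ℝ (⊤ : ℕ∞) f) (x : ℝ) :
    HasDerivAt (fun x => f (y t x)) (deriv f (y t x) * pderivX y t x) x :=
  (smooth_d0 hf (y t x)).comp x (h.dy x)

lemma ep (h : SysAt T t τ κ a b g h1 h2 y l) (x : ℝ) :
    pderivT (pderivX y) t x =
      -τ * (a (y t x) * pderivX (pderivX y) t x + deriv a (y t x) * pderivX y t x ^ 2
        + b (y t x) * pderivX (pderivX l) t x + deriv b (y t x) * pderivX y t x * pderivX l t x)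
      + (κ * deriv h1 (y t x) + τ * deriv h2 (y t x)) * pderivX y t x := by
  have e := h.sy.hasDerivAt_mixed h.ht x
  rw [show (fun z => pderivT y t z) = _ from funext h.ey] at e
  have e' := (((((h.dcomp h.sa x).mul (h.dy1 x)).add ((h.dcomp h.sb x).mul (h.dl1 x))).const_mul
    (-τ)).add (((h.dcomp h.sh1 x).const_mul κ).add ((h.dcomp h.sh2 x).const_mul τ)))
  rw [e.unique e']
  ring

lemma eq (h : SysAt T t τ κ a b g h1 h2 y l) (x : ℝ) :
    pderivT (pderivX l) t x =
      -τ * (b (y t x) * pderivX (pderivX y) t x + deriv b (y t x) * pderivX y t x ^ 2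
        + a (y t x) * pderivX (pderivX l) t x + deriv a (y t x) * pderivX y t x * pderivX l t x)
      + τ * (deriv g (y t x) * pderivX y t x) := by
  have e := h.sl.hasDerivAt_mixed h.ht x
  rw [show (fun z => pderivT l t z) = _ from funext h.el] at e
  have e' := (((((h.dcomp h.sb x).mul (h.dy1 x)).add ((h.dcomp h.sa x).mul (h.dl1 x))).const_mul
    (-τ)).add ((h.dcomp h.sg x).const_mul τ))
  rw [e.unique e']
  ring

lemma eP (h : SysAt T t τ κ a b g h1 h2 y l) (x : ℝ) :
    pderivT (pderivX (pderivX y)) t x =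
      -τ * (a (y t x) * pderivX (pderivX (pderivX y)) t x
        + 3 * deriv a (y t x) * pderivX y t x * pderivX (pderivX y) t x
        + deriv (deriv a) (y t x) * pderivX y t x ^ 3
        + b (y t x) * pderivX (pderivX (pderivX l)) t x
        + 2 * deriv b (y t x) * pderivX y t x * pderivX (pderivX l) t x
        + deriv b (y t x) * pderivX (pderivX y) t x * pderivX l t x
        + deriv (deriv b) (y t x) * pderivX y t x ^ 2 * pderivX l t x)
      + (κ * deriv (deriv h1) (y t x) + τ * deriv (deriv h2) (y t x)) * pderivX y t x ^ 2
      + (κ * deriv h1 (y t x) + τ * deriv h2 (y t x)) * pderivX (pderivX y) t x := by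
  have e := (h.sy.pderivX h.hT).hasDerivAt_mixed h.ht x
  rw [show (fun z => pderivT (pderivX y) t z) = _ from funext h.ep] at e
  have e' := ((((((h.dcomp h.sa x).mul (h.dy2 x)).add
    ((h.dcomp (smooth_deriv h.sa) x).mul ((h.dy1 x).pow 2))).add
    ((h.dcomp h.sb x).mul (h.dl2 x))).add
    (((h.dcomp (smooth_deriv h.sb) x).mul (h.dy1 x)).mul (h.dl1 x))).const_mul (-τ)).add
    ((((h.dcomp (smooth_deriv h.sh1) x).const_mul κ).add
      ((h.dcomp (smooth_deriv h.sh2) x).const_mul τ)).mul (h.dy1 x))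
  rw [e.unique e']
  simp only [Pi.add_apply, Pi.mul_apply, Pi.pow_apply]
  push_cast
  ring

lemma eQ (h : SysAt T t τ κ a b g h1 h2 y l) (x : ℝ) :
    pderivT (pderivX (pderivX l)) t x =
      -τ * (b (y t x) * pderivX (pderivX (pderivX y)) t x
        + 3 * deriv b (y t x) * pderivX y t x * pderivX (pderivX y) t x
        + deriv (deriv b) (y t x) * pderivX y t x ^ 3
        + a (y t x) * pderivX (pderivX (pderivX l)) t x
        + 2 * deriv a (y t x) * pderivX y t x * pderivX (pderivX l) t x
        + deriv a (y t x) * pderivX (pderivX y) t x * pderivX l t x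
        + deriv (deriv a) (y t x) * pderivX y t x ^ 2 * pderivX l t x)
      + τ * (deriv (deriv g) (y t x) * pderivX y t x ^ 2
        + deriv g (y t x) * pderivX (pderivX y) t x) := by
  have e := (h.sl.pderivX h.hT).hasDerivAt_mixed h.ht x
  rw [show (fun z => pderivT (pderivX l) t z) = _ from funext h.eq] at e
  have e' := ((((((h.dcomp h.sb x).mul (h.dy2 x)).add
    ((h.dcomp (smooth_deriv h.sb) x).mul ((h.dy1 x).pow 2))).add
    ((h.dcomp h.sa x).mul (h.dl2 x))).add
    (((h.dcomp (smooth_deriv h.sa) x).mul (h.dy1 x)).mul (h.dl1 x))).const_mul (-τ)).add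
    (((h.dcomp (smooth_deriv h.sg) x).mul (h.dy1 x)).const_mul τ)
  rw [e.unique e']
  simp only [Pi.add_apply, Pi.mul_apply, Pi.pow_apply]
  push_cast
  ring

/-- The remainder of the energy density. -/
noncomputable def RE (t τ κ : ℝ) (a b g h1 h2 : ℝ → ℝ) (y l : ℝ → ℝ → ℝ) (x : ℝ) : ℝ :=
  τ * (1 / 2 * deriv a (y t x) * pderivX y t x *
      (pderivX (pderivX y) t x ^ 2 + pderivX (pderivX l) t x ^ 2)
      + deriv b (y t x) * pderivX y t x * pderivX (pderivX y) t x * pderivX (pderivX l) t x)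
  - τ * pderivX (pderivX y) t x * (3 * deriv a (y t x) * pderivX y t x * pderivX (pderivX y) t x
      + deriv (deriv a) (y t x) * pderivX y t x ^ 3
      + 2 * deriv b (y t x) * pderivX y t x * pderivX (pderivX l) t x
      + deriv b (y t x) * pderivX (pderivX y) t x * pderivX l t x
      + deriv (deriv b) (y t x) * pderivX y t x ^ 2 * pderivX l t x)
  - τ * pderivX (pderivX l) t x * (3 * deriv b (y t x) * pderivX y t x * pderivX (pderivX y) t x
      + deriv (deriv b) (y t x) * pderivX y t x ^ 3
      + 2 * deriv a (y t x) * pderivX y t x * pderivX (pderivX l) t x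
      + deriv (deriv a) (y t x) * pderivX y t x ^ 2 * pderivX l t x
      + deriv a (y t x) * pderivX (pderivX y) t x * pderivX l t x)
  + (κ * deriv (deriv h1) (y t x) + τ * deriv (deriv h2) (y t x)) * pderivX y t x ^ 2
      * pderivX (pderivX y) t x
  + (κ * deriv h1 (y t x) + τ * deriv h2 (y t x)) * pderivX (pderivX y) t x ^ 2
  + τ * pderivX (pderivX l) t x * (deriv (deriv g) (y t x) * pderivX y t x ^ 2
      + deriv g (y t x) * pderivX (pderivX y) t x)

/-- The remainder of the correction density. -/
noncomputable def RX (t τ κ : ℝ) (a b g h1 h2 : ℝ → ℝ) (y l : ℝ → ℝ → ℝ) (x : ℝ) : ℝ :=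
  τ * (b (y t x) * pderivX (pderivX l) t x ^ 2 - b (y t x) * pderivX (pderivX y) t x ^ 2)
  + τ * (deriv a (y t x) * pderivX y t x ^ 2 * pderivX (pderivX l) t x
      + deriv b (y t x) * pderivX y t x * pderivX l t x * pderivX (pderivX l) t x)
  - τ * (deriv b (y t x) * pderivX y t x ^ 2 * pderivX (pderivX y) t x
      + deriv a (y t x) * pderivX y t x * pderivX l t x * pderivX (pderivX y) t x)
  - (κ * deriv h1 (y t x) + τ * deriv h2 (y t x)) * pderivX y t x * pderivX (pderivX l) t x
  + τ * deriv g (y t x) * pderivX y t x * pderivX (pderivX y) t x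

lemma cdy (h : SysAt T t τ κ a b g h1 h2 y l) : Continuous (fun x => y t x) :=
  h.sy.cont_x (Ioo_subset_Icc_self h.ht)
lemma cdy1 (h : SysAt T t τ κ a b g h1 h2 y l) : Continuous (fun x => pderivX y t x) :=
  (h.sy.pderivX h.hT).cont_x (Ioo_subset_Icc_self h.ht)
lemma cdl1 (h : SysAt T t τ κ a b g h1 h2 y l) : Continuous (fun x => pderivX l t x) :=
  (h.sl.pderivX h.hT).cont_x (Ioo_subset_Icc_self h.ht)
lemma cdy2 (h : SysAt T t τ κ a b g h1 h2 y l) : Continuous (fun x => pderivX (pderivX y) t x) :=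
  ((h.sy.pderivX h.hT).pderivX h.hT).cont_x (Ioo_subset_Icc_self h.ht)
lemma cdl2 (h : SysAt T t τ κ a b g h1 h2 y l) : Continuous (fun x => pderivX (pderivX l) t x) :=
  ((h.sl.pderivX h.hT).pderivX h.hT).cont_x (Ioo_subset_Icc_self h.ht)
lemma ccomp (h : SysAt T t τ κ a b g h1 h2 y l) {f : ℝ → ℝ} (hf : ContDiff ℝ (⊤ : ℕ∞) f) :
    Continuous (fun x => f (y t x)) := hf.continuous.comp h.cdy

lemma cRE (h : SysAt T t τ κ a b g h1 h2 y l) : Continuous (RE t τ κ a b g h1 h2 y l) := by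
  have c0 := h.cdy1
  have c1 := h.cdl1
  have c2 := h.cdy2
  have c3 := h.cdl2
  have c6 := h.ccomp (smooth_deriv h.sa)
  have c7 := h.ccomp (smooth_deriv h.sb)
  have c8 := h.ccomp (smooth_deriv h.sg)
  have c9 := h.ccomp (smooth_deriv h.sh1)
  have c10 := h.ccomp (smooth_deriv h.sh2)
  have d6 := h.ccomp (smooth_deriv (smooth_deriv h.sa))
  have d7 := h.ccomp (smooth_deriv (smooth_deriv h.sb))
  have d8 := h.ccomp (smooth_deriv (smooth_deriv h.sg))
  have d9 := h.ccomp (smooth_deriv (smooth_deriv h.sh1))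
  have d10 := h.ccomp (smooth_deriv (smooth_deriv h.sh2))
  unfold RE
  fun_prop

lemma cRX (h : SysAt T t τ κ a b g h1 h2 y l) : Continuous (RX t τ κ a b g h1 h2 y l) := by
  have c0 := h.cdy1
  have c1 := h.cdl1
  have c2 := h.cdy2
  have c3 := h.cdl2
  have c5 := h.sb.continuous
  have c5' := h.cdy
  have c6 := h.ccomp (smooth_deriv h.sa)
  have c7 := h.ccomp (smooth_deriv h.sb)
  have c8 := h.ccomp (smooth_deriv h.sg)
  have c9 := h.ccomp (smooth_deriv h.sh1)
  have c10 := h.ccomp (smooth_deriv h.sh2)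
  unfold RX
  fun_prop

/-- Time derivative of the second order energy. -/
lemma energy_deriv (h : SysAt T t τ κ a b g h1 h2 y l) :
    HasDerivAt (fun t => ∫ x in (0:ℝ)..(2 * Real.pi),
        1 / 2 * (pderivX (pderivX y) t x ^ 2 + pderivX (pderivX l) t x ^ 2))
      (∫ x in (0:ℝ)..(2 * Real.pi), RE t τ κ a b g h1 h2 y l x) t := by
  have s2y := (h.sy.pderivX h.hT).pderivX h.hT
  have s2l := (h.sl.pderivX h.hT).pderivX h.hT
  have hs := Sm.const_mul (1 / 2) ((s2y.pow 2).add (s2l.pow 2))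
  have hd := hs.hasDerivAt_integral h.ht
  have hflux : ∀ x, HasDerivAt (fun x => -τ * (1 / 2 * (a (y t x) *
      (pderivX (pderivX y) t x ^ 2 + pderivX (pderivX l) t x ^ 2)) +
      b (y t x) * (pderivX (pderivX y) t x * pderivX (pderivX l) t x))) _ x := fun x =>
    ((((h.dcomp h.sa x).mul (((h.dy2 x).pow 2).add ((h.dl2 x).pow 2))).const_mul (1 / 2)).add
      ((h.dcomp h.sb x).mul ((h.dy2 x).mul (h.dl2 x)))).const_mul (-τ)
  have hper := fun x => periodic_pderivX (periodic_pderivX h.py) t x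
  have hperl := fun x => periodic_pderivX (periodic_pderivX h.pl) t x
  have c5 := h.sa.continuous
  have c5' := h.sb.continuous
  have cy := h.cdy
  have c6 := h.ccomp (smooth_deriv h.sa)
  have c7 := h.ccomp (smooth_deriv h.sb)
  have c0 := h.cdy1
  have c2 := h.cdy2
  have c3 := h.cdl2
  have c4 := (s2y.pderivX h.hT).cont_x (Ioo_subset_Icc_self h.ht)
  have c4' := (s2l.pderivX h.hT).cont_x (Ioo_subset_Icc_self h.ht)
  convert hd using 1
  refine (integral_flux hflux ?_ h.cRE ?_ fun x => ?_).symm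
  · simp only [Pi.add_apply, Pi.mul_apply, Pi.pow_apply]
    fun_prop
  · have e1 := h.py t 0
    have e2 := hper 0
    have e3 := hperl 0
    rw [zero_add] at e1 e2 e3
    simp only [e1, e2, e3]
  · have e1 : pderivT (fun t x => 1 / 2 * (pderivX (pderivX y) t x ^ 2
        + pderivX (pderivX l) t x ^ 2)) t x
        = pderivX (pderivX y) t x * pderivT (pderivX (pderivX y)) t x
          + pderivX (pderivX l) t x * pderivT (pderivX (pderivX l)) t x := by
      have e0 := ((((s2y.hasDerivAt_t h.ht x).pow 2).add
        ((s2l.hasDerivAt_t h.ht x).pow 2)).const_mul (1 / 2 : ℝ))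
      refine (HasDerivAt.deriv e0).trans ?_
      push_cast
      ring
    rw [e1, h.eP, h.eQ, RE]
    simp only [Pi.add_apply, Pi.mul_apply, Pi.pow_apply]
    push_cast
    ring

/-- Time derivative of the correction functional. -/
lemma corr_deriv (h : SysAt T t τ κ a b g h1 h2 y l) :
    HasDerivAt (fun t => ∫ x in (0:ℝ)..(2 * Real.pi), pderivX (pderivX y) t x * pderivX l t x)
      (∫ x in (0:ℝ)..(2 * Real.pi), RX t τ κ a b g h1 h2 y l x) t := by
  have s1y := (h.sy.pderivX h.hT)
  have s1l := (h.sl.pderivX h.hT)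
  have s2y := (h.sy.pderivX h.hT).pderivX h.hT
  have hs := s2y.mul s1l
  have hd := hs.hasDerivAt_integral h.ht
  have hflux : ∀ x, HasDerivAt (fun x => pderivT (pderivX y) t x * pderivX l t x)
      (pderivT (pderivX (pderivX y)) t x * pderivX l t x +
        pderivT (pderivX y) t x * pderivX (pderivX l) t x) x := fun x =>
    (s1y.hasDerivAt_mixed h.ht x).mul (h.dl1 x)
  have c4 : Continuous (fun x => pderivT (pderivX (pderivX y)) t x) :=
    continuous_iff_continuousAt.2 fun x => (s2y.hasDerivAt_mixed h.ht x).continuousAt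
  have c5 : Continuous (fun x => pderivT (pderivX y) t x) :=
    continuous_iff_continuousAt.2 fun x => (s1y.hasDerivAt_mixed h.ht x).continuousAt
  have c1 := h.cdl1
  have c2 := h.cdy2
  have c3 := h.cdl2
  convert hd using 1
  refine (integral_flux hflux (by fun_prop) h.cRX ?_ fun x => ?_).symm
  · have e1 := h.py t 0
    have e2 := periodic_pderivX (periodic_pderivX h.py) t 0
    have e3 := periodic_pderivX (periodic_pderivX h.pl) t 0
    have e4 := periodic_pderivX h.py t 0
    have e5 := periodic_pderivX h.pl t 0
    rw [zero_add] at e1 e2 e3 e4 e5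
    simp only [h.ep, e1, e2, e3, e4, e5]
  · have e1 : pderivT (fun t x => pderivX (pderivX y) t x * pderivX l t x) t x
        = pderivT (pderivX (pderivX y)) t x * pderivX l t x +
          pderivX (pderivX y) t x * pderivT (pderivX l) t x :=
      HasDerivAt.deriv ((s2y.hasDerivAt_t h.ht x).mul (s1l.hasDerivAt_t h.ht x))
    rw [e1, h.ep, h.eq, RX]
    ring

end SysAt

/-- `∫ (y_xx² + l_xx²)`. -/
noncomputable def JJ (y l : ℝ → ℝ → ℝ) (t : ℝ) : ℝ :=
  ∫ x in (0:ℝ)..(2 * Real.pi), (pderivX (pderivX y) t x ^ 2 + pderivX (pderivX l) t x ^ 2)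

/-- `∫ y_xx l_x`. -/
noncomputable def XX (y l : ℝ → ℝ → ℝ) (t : ℝ) : ℝ :=
  ∫ x in (0:ℝ)..(2 * Real.pi), pderivX (pderivX y) t x * pderivX l t x

lemma sup_sq_sm {T : ℝ} (hT : 1 < T) {y : ℝ → ℝ → ℝ} (sy : Sm T y)
    (py : ∀ t x, y t (x + 2 * Real.pi) = y t x) {t : ℝ} (ht : t ∈ Icc 1 T) (x : ℝ) :
    pderivX y t x ^ 2 ≤ 7 * ∫ x in (0:ℝ)..(2 * Real.pi), pderivX (pderivX y) t x ^ 2 :=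
  sup_sq_le (fun x => sy.hasDerivAt_x ht x) (fun x => (sy.pderivX hT).hasDerivAt_x ht x)
    (((sy.pderivX hT).pderivX hT).cont_x ht) (fun x => py t x)
    (fun x => periodic_pderivX py t x) x

lemma int_sq_sm {T : ℝ} (hT : 1 < T) {y : ℝ → ℝ → ℝ} (sy : Sm T y)
    (py : ∀ t x, y t (x + 2 * Real.pi) = y t x) {t : ℝ} (ht : t ∈ Icc 1 T) :
    ∫ x in (0:ℝ)..(2 * Real.pi), pderivX y t x ^ 2 ≤
      49 * ∫ x in (0:ℝ)..(2 * Real.pi), pderivX (pderivX y) t x ^ 2 := by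
  set I := ∫ x in (0:ℝ)..(2 * Real.pi), pderivX (pderivX y) t x ^ 2 with hI
  have hpi : (0:ℝ) < 2 * Real.pi := Real.two_pi_pos
  have hI0 : 0 ≤ I := intervalIntegral.integral_nonneg hpi.le fun x _ => sq_nonneg _
  have h1 : ∫ x in (0:ℝ)..(2 * Real.pi), pderivX y t x ^ 2 ≤
      ∫ x in (0:ℝ)..(2 * Real.pi), 7 * I := by
    refine intervalIntegral.integral_mono_on hpi.le
      ((((sy.pderivX hT).cont_x ht).pow 2).intervalIntegrable _ _) intervalIntegrable_const ?_
    intro x _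
    exact sup_sq_sm hT sy py ht x
  rw [intervalIntegral.integral_const, smul_eq_mul, sub_zero] at h1
  nlinarith [two_pi_lt]

lemma JJ_eq {T : ℝ} (hT : 1 < T) {y l : ℝ → ℝ → ℝ} (sy : Sm T y) (sl : Sm T l)
    {t : ℝ} (ht : t ∈ Icc 1 T) :
    JJ y l t = (∫ x in (0:ℝ)..(2 * Real.pi), pderivX (pderivX y) t x ^ 2) +
      ∫ x in (0:ℝ)..(2 * Real.pi), pderivX (pderivX l) t x ^ 2 :=
  intervalIntegral.integral_add
    (((((sy.pderivX hT).pderivX hT).cont_x ht).pow 2).intervalIntegrable _ _)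
    (((((sl.pderivX hT).pderivX hT).cont_x ht).pow 2).intervalIntegrable _ _)

lemma JJ_nonneg (y l : ℝ → ℝ → ℝ) (t : ℝ) : 0 ≤ JJ y l t :=
  intervalIntegral.integral_nonneg Real.two_pi_pos.le fun x _ => by positivity

lemma W_le {T : ℝ} (hT : 1 < T) {y l : ℝ → ℝ → ℝ} (sy : Sm T y) (sl : Sm T l)
    (py : ∀ t x, y t (x + 2 * Real.pi) = y t x) (pl : ∀ t x, l t (x + 2 * Real.pi) = l t x)
    {t : ℝ} (ht : t ∈ Icc 1 T) :
    ∫ x in (0:ℝ)..(2 * Real.pi), (pderivX (pderivX y) t x ^ 2 + pderivX (pderivX l) t x ^ 2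
      + pderivX y t x ^ 2 + pderivX l t x ^ 2) ≤ 50 * JJ y l t := by
  have c1 := (sy.pderivX hT).cont_x ht
  have c2 := (sl.pderivX hT).cont_x ht
  have c3 := ((sy.pderivX hT).pderivX hT).cont_x ht
  have c4 := ((sl.pderivX hT).pderivX hT).cont_x ht
  rw [intervalIntegral.integral_add (Continuous.intervalIntegrable (by fun_prop) _ _)
    (Continuous.intervalIntegrable (by fun_prop) _ _),
    intervalIntegral.integral_add (Continuous.intervalIntegrable (by fun_prop) _ _)
    (Continuous.intervalIntegrable (by fun_prop) _ _)]
  change JJ y l t + _ + _ ≤ _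
  have := int_sq_sm hT sy py ht
  have := int_sq_sm hT sl pl ht
  have := JJ_eq hT sy sl ht
  linarith

lemma XX_le {T : ℝ} (hT : 1 < T) {y l : ℝ → ℝ → ℝ} (sy : Sm T y) (sl : Sm T l)
    (py : ∀ t x, y t (x + 2 * Real.pi) = y t x) (pl : ∀ t x, l t (x + 2 * Real.pi) = l t x)
    {t : ℝ} (ht : t ∈ Icc 1 T) : |XX y l t| ≤ 25 * JJ y l t := by
  have c1 := (sy.pderivX hT).cont_x ht
  have c2 := (sl.pderivX hT).cont_x ht
  have c3 := ((sy.pderivX hT).pderivX hT).cont_x ht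
  have c4 := ((sl.pderivX hT).pderivX hT).cont_x ht
  have hpi : (0:ℝ) ≤ 2 * Real.pi := Real.two_pi_pos.le
  have h1 : |XX y l t| ≤ ∫ x in (0:ℝ)..(2 * Real.pi), 1 / 2 * (pderivX (pderivX y) t x ^ 2 +
      pderivX (pderivX l) t x ^ 2 + pderivX y t x ^ 2 + pderivX l t x ^ 2) := by
    unfold XX
    refine (intervalIntegral.abs_integral_le_integral_abs hpi).trans ?_
    refine intervalIntegral.integral_mono_on hpi (Continuous.intervalIntegrable (by fun_prop) _ _)
      (Continuous.intervalIntegrable (by fun_prop) _ _) ?_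
    intro x _
    rw [abs_mul]
    nlinarith [sq_nonneg (|pderivX (pderivX y) t x| - |pderivX l t x|),
      sq_abs (pderivX (pderivX y) t x), sq_abs (pderivX l t x),
      sq_nonneg (pderivX (pderivX l) t x), sq_nonneg (pderivX y t x)]
  rw [intervalIntegral.integral_const_mul] at h1
  have := W_le hT sy sl py pl ht
  linarith

/-- The differential inequality at fixed time. -/
lemma F_deriv_bound {T t τ β s M N A Ad u : ℝ} {a b g h1 h2 : ℝ → ℝ} {y l : ℝ → ℝ → ℝ}
    (h : SysAt T t τ (-(β / t)) a b g h1 h2 y l) (hc : Coef a b g h1 h2 s M)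
    (hM : 1 ≤ M) (hN0 : 0 ≤ N) (hN : N ≤ 1) (hβ : 0 < β) (hβ1 : β ≤ 1) (hτ : 1 / t ≤ τ)
    (hA : 0 ≤ A) (hAd : |Ad| ≤ A / t) (hu : t ≤ u) (hAs : A * τ * s = β / (2 * u))
    (by0 : ∀ x, |y t x| ≤ N) (by1 : ∀ x, |pderivX y t x| ≤ N) (bl1 : ∀ x, |pderivX l t x| ≤ N) :
    (∫ x in (0:ℝ)..(2 * Real.pi), SysAt.RE t τ (-(β / t)) a b g h1 h2 y l x)
      - (Ad * XX y l t + A * ∫ x in (0:ℝ)..(2 * Real.pi), SysAt.RX t τ (-(β / t)) a b g h1 h2 y l x)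
    ≤ -(β / (2 * u)) * JJ y l t
      + 50 * ((30 + 10 * A) * M * (τ * N) + A * (M + 1) / t) * JJ y l t := by
  have hpi : (0:ℝ) ≤ 2 * Real.pi := Real.two_pi_pos.le
  have ht1 : 1 ≤ t := h.ht.1.le
  have ht0 : 0 < t := by linarith
  have hu0 : 0 < u := by linarith
  have hτ0 : 0 ≤ τ := le_trans (by positivity) hτ
  have htI := Ioo_subset_Icc_self h.ht
  set k := (30 + 10 * A) * M * (τ * N) + A * (M + 1) / t with hk
  have hk0 : 0 ≤ k := by
    have : 0 ≤ M := by linarith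
    positivity
  have cE := h.cRE
  have cX := h.cRX
  have c1 := h.cdy1
  have c2 := h.cdl1
  have c3 := h.cdy2
  have c4 := h.cdl2
  have e1 : (∫ x in (0:ℝ)..(2 * Real.pi), SysAt.RE t τ (-(β / t)) a b g h1 h2 y l x)
      - (Ad * XX y l t + A * ∫ x in (0:ℝ)..(2 * Real.pi), SysAt.RX t τ (-(β / t)) a b g h1 h2 y l x)
      = ∫ x in (0:ℝ)..(2 * Real.pi), (SysAt.RE t τ (-(β / t)) a b g h1 h2 y l x
        - (Ad * (pderivX (pderivX y) t x * pderivX l t x)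
          + A * SysAt.RX t τ (-(β / t)) a b g h1 h2 y l x)) := by
    rw [intervalIntegral.integral_sub (cE.intervalIntegrable _ _)
      (Continuous.intervalIntegrable (by fun_prop) _ _),
      intervalIntegral.integral_add (Continuous.intervalIntegrable (by fun_prop) _ _)
      (Continuous.intervalIntegrable (by fun_prop) _ _),
      intervalIntegral.integral_const_mul, intervalIntegral.integral_const_mul]
    rfl
  have e2 : ∫ x in (0:ℝ)..(2 * Real.pi), (SysAt.RE t τ (-(β / t)) a b g h1 h2 y l x
        - (Ad * (pderivX (pderivX y) t x * pderivX l t x)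
          + A * SysAt.RX t τ (-(β / t)) a b g h1 h2 y l x)) ≤
      ∫ x in (0:ℝ)..(2 * Real.pi),
        (-(β / (2 * u)) * (pderivX (pderivX y) t x ^ 2 + pderivX (pderivX l) t x ^ 2)
        + k * (pderivX (pderivX y) t x ^ 2 + pderivX (pderivX l) t x ^ 2
          + pderivX y t x ^ 2 + pderivX l t x ^ 2)) := by
    refine intervalIntegral.integral_mono_on hpi (Continuous.intervalIntegrable (by fun_prop) _ _)
      (Continuous.intervalIntegrable (by fun_prop) _ _) ?_
    intro x _
    have y1 : |y t x| ≤ 1 := (by0 x).trans hN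
    have hMN : M * |y t x| ≤ M * N := mul_le_mul_of_nonneg_left (by0 x) (by linarith)
    have bE := RE_bound (P := pderivX (pderivX y) t x) (Q := pderivX (pderivX l) t x)
      hM hN0 hN hβ hβ1 ht1 hτ (by1 x) (bl1 x) (hc.a1 _ y1) (hc.a2 _ y1) (hc.b1 _ y1) (hc.b2 _ y1)
      ((hc.g1 _ y1).trans hMN) (hc.g2 _ y1) (hc.h11' (y t x)) (hc.h12 _ y1)
      ((hc.h21 _ y1).trans hMN) (hc.h22 _ y1)
    have bX := RX_bound (P := pderivX (pderivX y) t x) (Q := pderivX (pderivX l) t x)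
      hM hN0 hN hβ hβ1 ht1 hτ (by1 x) (bl1 x) (hc.a1 _ y1) ((hc.b0 _ y1).trans hMN) (hc.b1 _ y1)
      ((hc.g1 _ y1).trans hMN) (hc.h11 _ y1) ((hc.h21 _ y1).trans hMN)
    change SysAt.RE t τ (-(β / t)) a b g h1 h2 y l x ≤ _ at bE
    change -SysAt.RX t τ (-(β / t)) a b g h1 h2 y l x ≤ _ at bX
    generalize SysAt.RE t τ (-(β / t)) a b g h1 h2 y l x = re at *
    generalize SysAt.RX t τ (-(β / t)) a b g h1 h2 y l x = rx at *
    generalize pderivX (pderivX y) t x = P at *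
    generalize pderivX (pderivX l) t x = Q at *
    generalize pderivX y t x = p at *
    generalize pderivX l t x = q at *
    have hW : P ^ 2 + q ^ 2 ≤ 2 * (P ^ 2 + Q ^ 2 + p ^ 2 + q ^ 2) := by nlinarith [sq_nonneg P, sq_nonneg Q, sq_nonneg p, sq_nonneg q]
    have bd := (quad_bd hAd hW).2
    have bX' := mul_le_mul_of_nonneg_left bX hA
    have hlast : -(β / t) * P ^ 2 + β / (2 * u) * P ^ 2 ≤ -(β / (2 * u)) * P ^ 2 := by
      have : β / u ≤ β / t := div_le_div_of_nonneg_left hβ.le ht0 hu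
      have e : β / (2 * u) = β / u / 2 := by field_simp
      rw [e]
      nlinarith [sq_nonneg P]
    have hrew : A * (-τ * s * (Q ^ 2 - P ^ 2)) = -(β / (2 * u)) * (Q ^ 2 - P ^ 2) := by
      rw [← hAs]; ring
    have hkk : k * (P ^ 2 + Q ^ 2 + p ^ 2 + q ^ 2) =
        30 * M * (τ * N) * (P ^ 2 + Q ^ 2 + p ^ 2 + q ^ 2) +
        A * ((10 * M * (τ * N) + M / t) * (P ^ 2 + Q ^ 2 + p ^ 2 + q ^ 2)) +
        A / t * (P ^ 2 + Q ^ 2 + p ^ 2 + q ^ 2) := by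
      rw [hk]; ring
    linarith
  have e3 : ∫ x in (0:ℝ)..(2 * Real.pi),
        (-(β / (2 * u)) * (pderivX (pderivX y) t x ^ 2 + pderivX (pderivX l) t x ^ 2)
        + k * (pderivX (pderivX y) t x ^ 2 + pderivX (pderivX l) t x ^ 2
          + pderivX y t x ^ 2 + pderivX l t x ^ 2)) ≤
      -(β / (2 * u)) * JJ y l t + k * (50 * JJ y l t) := by
    rw [intervalIntegral.integral_add (Continuous.intervalIntegrable (by fun_prop) _ _)
      (Continuous.intervalIntegrable (by fun_prop) _ _),
      intervalIntegral.integral_const_mul, intervalIntegral.integral_const_mul]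
    have := mul_le_mul_of_nonneg_left (W_le h.hT h.sy h.sl h.py h.pl htI) hk0
    change -(β / (2 * u)) * JJ y l t + _ ≤ _
    linarith
  rw [e1]
  linarith [e2.trans e3]

lemma gronwall_exp {F F' G G' : ℝ → ℝ} {T : ℝ} (hF : ContinuousOn F (Icc 1 T))
    (hG : ContinuousOn G (Icc 1 T)) (dF : ∀ t ∈ Ioo 1 T, HasDerivAt F (F' t) t)
    (dG : ∀ t ∈ Ioo 1 T, HasDerivAt G (G' t) t) (hle : ∀ t ∈ Ioo 1 T, F' t ≤ G' t * F t)
    {t : ℝ} (ht : t ∈ Icc 1 T) : F t ≤ F 1 * Real.exp (G t - G 1) := by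
  have hanti : AntitoneOn (fun t => F t * Real.exp (-G t)) (Icc 1 T) := by
    refine antitoneOn_of_deriv_nonpos (convex_Icc 1 T) (hF.mul (hG.neg.rexp)) ?_ ?_
    · intro t ht
      rw [interior_Icc] at ht
      exact ((dF t ht).mul (dG t ht).neg.exp).differentiableAt.differentiableWithinAt
    · intro t ht
      rw [interior_Icc] at ht
      have e := ((dF t ht).mul (dG t ht).neg.exp).deriv
      have e' : deriv (fun t => F t * Real.exp (-G t)) t = _ := e
      rw [e']
      have h1 := hle t ht
      have h2 : 0 < Real.exp (-G t) := Real.exp_pos _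
      simp only [Pi.neg_apply]
      nlinarith
  have h := hanti (left_mem_Icc.2 (ht.1.trans ht.2)) ht ht.1
  simp only at h
  have h2 : F t = F t * Real.exp (-G t) * Real.exp (G t) := by
    rw [mul_assoc, ← Real.exp_add]; simp
  rw [h2, sub_eq_neg_add, Real.exp_add, ← mul_assoc]
  exact mul_le_mul_of_nonneg_right h (Real.exp_pos _).le

lemma exists_T0 {α s : ℝ} (hα1 : α < 1) (hs : 0 < s) :
    ∃ T0 : ℝ, 1 ≤ T0 ∧ T0 ^ (α - 1) / (2 * s) ≤ 1 / 100 := by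
  have h := tendsto_rpow_neg_atTop (y := 1 - α) (by linarith)
  have h2 : ∀ᶠ x : ℝ in atTop, x ^ (-(1 - α)) < s / 50 := h.eventually_lt_const (by positivity)
  obtain ⟨T0, h3, h4⟩ := (h2.and (eventually_ge_atTop 1)).exists
  refine ⟨T0, h4, ?_⟩
  rw [neg_sub] at h3
  rw [div_le_iff₀ (by positivity)]
  linarith

/-- Decay of the second order energy. -/
theorem energy_decay {α β s M : ℝ} (hα0 : 0 < α) (hα1 : α < 1) (hβ : 0 < β) (hβ1 : β ≤ 1)
    (hγ : 1 < α + β / 2) (hs : 0 < s) (hM : 1 ≤ M) :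
    ∃ C : ℝ, 0 < C ∧ ∀ (a b g h1 h2 : ℝ → ℝ), Coef a b g h1 h2 s M → ∀ (T : ℝ), 1 < T →
      ∀ y l : ℝ → ℝ → ℝ, Sm T y → Sm T l → (∀ t x, y t (x + 2 * Real.pi) = y t x) →
      (∀ t x, l t (x + 2 * Real.pi) = l t x) →
      (∀ t ∈ Ioo 1 T, ∀ x, pderivT y t x =
        -(t ^ (-α)) * (a (y t x) * pderivX y t x + b (y t x) * pderivX l t x)
        + (-(β / t) * h1 (y t x) + t ^ (-α) * h2 (y t x))) →
      (∀ t ∈ Ioo 1 T, ∀ x, pderivT l t x =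
        -(t ^ (-α)) * (b (y t x) * pderivX y t x + a (y t x) * pderivX l t x)
        + t ^ (-α) * g (y t x)) →
      (∀ t ∈ Icc 1 T, ∀ x, |y t x| ≤ t ^ (-(β / 2))) →
      (∀ t ∈ Icc 1 T, ∀ x, |pderivX y t x| ≤ t ^ (-(β / 2))) →
      (∀ t ∈ Icc 1 T, ∀ x, |pderivX l t x| ≤ t ^ (-(β / 2))) →
      ∀ t ∈ Icc 1 T, JJ y l t ≤ C * JJ y l 1 * t ^ (-β) := by
  obtain ⟨T0, hT0, hT0s⟩ := exists_T0 hα1 hs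
  set γ := α + β / 2 with hγd
  set C1 : ℝ := 8000 * M + 4 * (50 * (M + 1) + 25) / (2 * s) with hC1
  have hC10 : 0 < C1 := by positivity
  set E : ℝ := Real.exp (β * Real.log (1 + T0) + C1 / (γ - 1) + C1 / (1 - α)) with hE
  refine ⟨3 * E, by positivity, ?_⟩
  intro a b g h1 h2 hc T hT y l sy sl py pl ey el b0 b1 b2
  set A : ℝ → ℝ := fun t => β / (2 * s) * (t ^ α / (t + T0)) with hA
  set F : ℝ → ℝ := fun t => (∫ x in (0:ℝ)..(2 * Real.pi),
    1 / 2 * (pderivX (pderivX y) t x ^ 2 + pderivX (pderivX l) t x ^ 2)) - A t * XX y l t with hF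
  set G : ℝ → ℝ := fun t => -β * Real.log (t + T0) - C1 / (γ - 1) * t ^ (1 - γ)
    - C1 / (1 - α) * t ^ (α - 1) with hG
  have hA0 : ∀ t, 1 ≤ t → 0 ≤ A t := fun t ht => by
    simp only [hA]; positivity
  have hA1 : ∀ t, 1 ≤ t → A t ≤ 1 / 100 := fun t ht => by
    have h0 : 0 < t + T0 := by linarith
    have e1 : t ^ α ≤ (t + T0) ^ α := Real.rpow_le_rpow (by linarith) (by linarith) hα0.le
    have e2 : t ^ α / (t + T0) ≤ (t + T0) ^ (α - 1) := by
      rw [Real.rpow_sub_one h0.ne']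
      gcongr
    have e3 : (t + T0) ^ (α - 1) ≤ T0 ^ (α - 1) :=
      Real.rpow_le_rpow_of_nonpos (by linarith) (by linarith) (by linarith)
    have e4 : t ^ α / (t + T0) ≤ T0 ^ (α - 1) := e2.trans e3
    calc A t ≤ 1 / (2 * s) * T0 ^ (α - 1) := by
          simp only [hA]
          gcongr
      _ = T0 ^ (α - 1) / (2 * s) := by ring
      _ ≤ _ := hT0s
  have hA2 : ∀ t, 1 ≤ t → A t / t ≤ 1 / (2 * s) * t ^ (α - 2) := fun t ht => by
    have h0 : 0 < t := by linarith
    have e : t ^ (α - 2) = t ^ α / t / t := by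
      rw [show α - 2 = α - 1 - 1 by ring, Real.rpow_sub_one h0.ne', Real.rpow_sub_one h0.ne']
    rw [e]
    simp only [hA]
    rw [mul_div_assoc]
    gcongr
    linarith
  have hAs : ∀ t, 1 ≤ t → A t * t ^ (-α) * s = β / (2 * (t + T0)) := fun t ht => by
    have h0 : 0 < t := by linarith
    have h1 : 0 < t ^ α := by positivity
    have h2 : 0 < t + T0 := by linarith
    simp only [hA]
    rw [Real.rpow_neg h0.le]
    field_simp
  have hAd : ∀ t, 1 ≤ t → HasDerivAt A (A t * (α / t - 1 / (t + T0))) t := fun t ht => by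
    have h0 : 0 < t := by linarith
    have h2 : 0 < t + T0 := by linarith
    have d1 := Real.hasDerivAt_rpow_const (x := t) (p := α) (Or.inl h0.ne')
    have d2 := ((d1.div ((hasDerivAt_id t).add_const T0) h2.ne').const_mul (β / (2 * s)))
    refine d2.congr_deriv ?_
    simp only [hA, id]
    rw [Real.rpow_sub_one h0.ne']
    field_simp
  have hAd' : ∀ t, 1 ≤ t → |A t * (α / t - 1 / (t + T0))| ≤ A t / t := fun t ht => by
    have h0 : 0 < t := by linarith
    have h2 : 0 < t + T0 := by linarith
    rw [abs_mul, abs_of_nonneg (hA0 t ht), div_eq_mul_inv (A t)]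
    refine mul_le_mul_of_nonneg_left ?_ (hA0 t ht)
    have e1 : 1 / (t + T0) ≤ 1 / t := one_div_le_one_div_of_le h0 (by linarith)
    have e2 : 0 < 1 / (t + T0) := by positivity
    have e3 : α / t ≤ 1 / t := by gcongr
    have e4 : 0 < α / t := by positivity
    rw [← one_div, abs_le]
    constructor <;> linarith
  have hXX : ∀ t ∈ Icc 1 T, |A t * XX y l t| ≤ 25 * A t * JJ y l t := fun t ht => by
    rw [abs_mul, abs_of_nonneg (hA0 t ht.1)]
    have := mul_le_mul_of_nonneg_left (XX_le hT sy sl py pl ht) (hA0 t ht.1)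
    linarith
  have hFe : ∀ t, F t = 1 / 2 * JJ y l t - A t * XX y l t := fun t => by
    simp only [hF, JJ]; rw [intervalIntegral.integral_const_mul]
  have hF1 : ∀ t ∈ Icc 1 T, JJ y l t ≤ 4 * F t ∧ 4 * F t ≤ 3 * JJ y l t := fun t ht => by
    have e1 := abs_le.1 (hXX t ht)
    have e2 := mul_le_mul_of_nonneg_right (hA1 t ht.1) (JJ_nonneg y l t)
    rw [hFe]
    constructor <;> linarith
  have hsys : ∀ t ∈ Ioo 1 T, SysAt T t (t ^ (-α)) (-(β / t)) a b g h1 h2 y l := fun t ht =>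
    ⟨ht, hT, sy, sl, py, pl, hc.sa, hc.sb, hc.sg, hc.sh1, hc.sh2, ey t ht, el t ht⟩
  have cF : ContinuousOn F (Icc 1 T) := by
    have c3 := ((sy.pderivX hT).pderivX hT).contOn
    have c4 := ((sl.pderivX hT).pderivX hT).contOn
    have c2 := (sl.pderivX hT).contOn
    refine ContinuousOn.sub (contOn_integral hT (continuousOn_const.mul ((c3.pow 2).add (c4.pow 2))))
      (ContinuousOn.mul ?_ (contOn_integral hT (c3.mul c2)))
    exact fun t ht => (hAd t ht.1).continuousAt.continuousWithinAt
  have dG : ∀ t, 1 ≤ t → HasDerivAt G (-β / (t + T0) + C1 * t ^ (-γ) + C1 * t ^ (α - 2)) t := by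
    intro t ht
    have h0 : 0 < t := by linarith
    have h2 : 0 < t + T0 := by linarith
    have d1 := (((hasDerivAt_id t).add_const T0).log h2.ne').const_mul (-β)
    have d2 := (Real.hasDerivAt_rpow_const (x := t) (p := 1 - γ) (Or.inl h0.ne')).const_mul
      (C1 / (γ - 1))
    have d3 := (Real.hasDerivAt_rpow_const (x := t) (p := α - 1) (Or.inl h0.ne')).const_mul
      (C1 / (1 - α))
    refine ((d1.sub d2).sub d3).congr_deriv ?_
    rw [show (1 - γ - 1) = -γ by ring, show α - 1 - 1 = α - 2 by ring]
    have n1 : γ - 1 ≠ 0 := by linarith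
    have n2 : 1 - α ≠ 0 := by linarith
    simp only [id]
    have q1 : C1 / (γ - 1) * ((1 - γ) * t ^ (-γ)) = -(C1 * t ^ (-γ)) := by
      field_simp; ring
    have q2 : C1 / (1 - α) * ((α - 1) * t ^ (α - 2)) = -(C1 * t ^ (α - 2)) := by
      field_simp; ring
    rw [q1, q2]
    ring
  intro t ht
  have key := gronwall_exp (F' := fun t => (∫ x in (0:ℝ)..(2 * Real.pi),
      SysAt.RE t (t ^ (-α)) (-(β / t)) a b g h1 h2 y l x)
      - ((A t * (α / t - 1 / (t + T0))) * XX y l t + A t * ∫ x in (0:ℝ)..(2 * Real.pi),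
        SysAt.RX t (t ^ (-α)) (-(β / t)) a b g h1 h2 y l x)) cF
    (fun t ht => (dG t ht.1).continuousAt.continuousWithinAt)
    (fun t ht => (hsys t ht).energy_deriv.sub ((hAd t ht.1.le).mul (hsys t ht).corr_deriv))
    (fun t ht => dG t ht.1.le) ?_ ht
  · have e1 : G t - G 1 ≤ (β * Real.log (1 + T0) + C1 / (γ - 1) + C1 / (1 - α))
        + (Real.log t * (-β)) := by
      have h0 : 0 < t := by linarith [ht.1]
      have p1 : 0 ≤ C1 / (γ - 1) * t ^ (1 - γ) := by
        have : 0 < γ - 1 := by linarith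
        positivity
      have p2 : 0 ≤ C1 / (1 - α) * t ^ (α - 1) := by
        have : 0 < 1 - α := by linarith
        positivity
      have p3 : Real.log t ≤ Real.log (t + T0) := Real.log_le_log h0 (by linarith)
      have p4 := mul_le_mul_of_nonneg_left p3 hβ.le
      simp only [hG, Real.one_rpow]
      linarith
    have e2 : Real.exp (G t - G 1) ≤ E * t ^ (-β) := by
      rw [Real.rpow_def_of_pos (by linarith [ht.1]), hE, ← Real.exp_add]
      exact Real.exp_le_exp.2 e1
    have q1 := hF1 t ht
    have q2 := hF1 1 ⟨le_rfl, hT.le⟩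
    have q3 : 0 ≤ F 1 := by linarith [JJ_nonneg y l 1, q2.1]
    have q4 : 0 ≤ E * t ^ (-β) := (Real.exp_pos _).le.trans e2
    calc JJ y l t ≤ 4 * F t := q1.1
      _ ≤ 4 * (F 1 * (E * t ^ (-β))) := by
        have := mul_le_mul_of_nonneg_left e2 q3
        linarith
      _ = (4 * F 1) * (E * t ^ (-β)) := by ring
      _ ≤ (3 * JJ y l 1) * (E * t ^ (-β)) := mul_le_mul_of_nonneg_right q2.2 q4
      _ = _ := by ring
  · intro t ht
    have htI := Ioo_subset_Icc_self ht
    have ht1 : 1 ≤ t := ht.1.le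
    have h0 : 0 < t := by linarith
    have hu : 0 < t + T0 := by linarith
    have hτ : 1 / t ≤ t ^ (-α) := by
      rw [one_div, ← Real.rpow_neg_one]
      exact Real.rpow_le_rpow_of_exponent_le ht1 (by linarith)
    have hN : t ^ (-(β / 2)) ≤ 1 := Real.rpow_le_one_of_one_le_of_nonpos ht1 (by linarith)
    have hb := F_deriv_bound (hsys t ht) hc hM (by positivity) hN hβ hβ1 hτ (hA0 t ht1)
      (hAd' t ht1) (show t ≤ t + T0 by linarith) (hAs t ht1) (b0 t htI) (b1 t htI) (b2 t htI)
    refine hb.trans ?_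
    have hτN : t ^ (-α) * t ^ (-(β / 2)) = t ^ (-γ) := by
      rw [← Real.rpow_add h0]; congr 1; simp only [hγd]; ring
    rw [hτN]
    have hJ := JJ_nonneg y l t
    have hFJ := (hF1 t htI)
    have hx := abs_le.1 (hXX t htI)
    have hFt := hFe t
    have hg : 0 < t ^ (-γ) := by positivity
    have hg2 : 0 < t ^ (α - 2) := by positivity
    have ha1 := hA1 t ht1
    have ha0 := hA0 t ht1
    have ha2 := hA2 t ht1
    have hF0 : 0 ≤ F t := by linarith [hFJ.1]
    -- first term
    have s1 : -(β / (2 * (t + T0))) * JJ y l t ≤ -β / (t + T0) * F t + 25 * (A t / t) * JJ y l t := by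
      have r1 : β / (t + T0) ≤ 1 / t := by gcongr; linarith
      have r0 : 0 ≤ β / (t + T0) := by positivity
      have r2 : -(β / (2 * (t + T0))) * JJ y l t
          = -β / (t + T0) * F t - β / (t + T0) * (A t * XX y l t) := by
        rw [hFt]; field_simp; ring
      have r3 : -(β / (t + T0) * (A t * XX y l t)) ≤ β / (t + T0) * (25 * A t * JJ y l t) := by
        have := mul_le_mul_of_nonneg_left hx.1 r0
        linarith
      have r4 : β / (t + T0) * (25 * A t * JJ y l t) ≤ 1 / t * (25 * A t * JJ y l t) :=
        mul_le_mul_of_nonneg_right r1 (by positivity)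
      have r5 : 1 / t * (25 * A t * JJ y l t) = 25 * (A t / t) * JJ y l t := by ring
      linarith
    have s2 : 50 * ((30 + 10 * A t) * M * t ^ (-γ) + A t * (M + 1) / t)
        ≤ 2000 * M * t ^ (-γ) + (50 * (M + 1)) * (A t / t) := by
      have : (30 + 10 * A t) * (M * t ^ (-γ)) ≤ 40 * (M * t ^ (-γ)) :=
        mul_le_mul_of_nonneg_right (by linarith) (by positivity)
      have e : A t * (M + 1) / t = (M + 1) * (A t / t) := by ring
      rw [e]
      linarith
    have s3 : (2000 * M * t ^ (-γ) + (50 * (M + 1) + 25) * (A t / t)) ≤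
        2000 * M * t ^ (-γ) + (50 * (M + 1) + 25) * (1 / (2 * s) * t ^ (α - 2)) := by
      have : 0 ≤ 50 * (M + 1) + 25 := by linarith
      gcongr
    have s4 : 4 * (2000 * M * t ^ (-γ) + (50 * (M + 1) + 25) * (1 / (2 * s) * t ^ (α - 2))) ≤
        C1 * t ^ (-γ) + C1 * t ^ (α - 2) := by
      have z1 : 0 ≤ 4 * (50 * (M + 1) + 25) / (2 * s) := by positivity
      have z2 : 0 ≤ 8000 * M := by linarith
      have z3 := mul_nonneg z1 hg.le
      have z4 := mul_nonneg z2 hg2.le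
      rw [hC1]
      have : 4 * (2000 * M * t ^ (-γ) + (50 * (M + 1) + 25) * (1 / (2 * s) * t ^ (α - 2))) =
        8000 * M * t ^ (-γ) + 4 * (50 * (M + 1) + 25) / (2 * s) * t ^ (α - 2) := by ring
      rw [this]
      linarith
    set kk := 2000 * M * t ^ (-γ) + (50 * (M + 1) + 25) * (1 / (2 * s) * t ^ (α - 2)) with hkk
    have hkk0 : 0 ≤ kk := by positivity
    have s5 := mul_le_mul_of_nonneg_right s2 hJ
    have s6 := mul_le_mul_of_nonneg_right s3 hJ
    have s7 := mul_le_mul_of_nonneg_left hFJ.1 hkk0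
    have s8 := mul_le_mul_of_nonneg_right s4 hF0
    have s9 : (-β / (t + T0) + C1 * t ^ (-γ) + C1 * t ^ (α - 2)) * F t =
      -β / (t + T0) * F t + (C1 * t ^ (-γ) + C1 * t ^ (α - 2)) * F t := by ring
    rw [s9]
    linarith

lemma bd_smooth {f : ℝ → ℝ} (hf : ContDiff ℝ (⊤ : ℕ∞) f) :
    ∃ M : ℝ, ∀ y, |y| ≤ 1 → |f y| ≤ M := by
  obtain ⟨M, hM⟩ := (isCompact_Icc (a := (-1:ℝ)) (b := 1)).exists_bound_of_continuousOn
    hf.continuous.continuousOn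
  exact ⟨M, fun y hy => hM y (abs_le.1 hy)⟩

lemma bd_smooth_lin {f : ℝ → ℝ} (hf : ContDiff ℝ (⊤ : ℕ∞) f) :
    ∃ M : ℝ, ∀ y, |y| ≤ 1 → |f y - f 0| ≤ M * |y| := by
  obtain ⟨M, hM⟩ := bd_smooth (smooth_deriv hf)
  refine ⟨M, fun y hy => ?_⟩
  have h := (convex_Icc (-1:ℝ) 1).norm_image_sub_le_of_norm_deriv_le (f := f) (C := M) (x := 0)
    (y := y) (fun x _ => hf.differentiable (by simp) x) (fun x hx => hM x (abs_le.2 hx))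
    (by constructor <;> norm_num) (abs_le.1 hy)
  simpa using h

noncomputable def qq (K y : ℝ) : ℝ := 1 + (1 - K) * Real.sinh y ^ 2
noncomputable def ca (K y : ℝ) : ℝ := (1 - K) * (Real.sinh y * Real.cosh y) / qq K y
noncomputable def cb (s K y : ℝ) : ℝ := s / qq K y
noncomputable def cg (s β K y : ℝ) : ℝ := s * β * Real.sinh y ^ 2 / qq K y
noncomputable def ch1 (y : ℝ) : ℝ := Real.sinh y * Real.cosh y
noncomputable def ch2 (β K y : ℝ) : ℝ :=
  β * (1 - K) * (Real.sinh y ^ 3 * Real.cosh y) / qq K y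

lemma qq_pos {K : ℝ} (hK : K < 1) (y : ℝ) : 0 < qq K y := by
  have : 0 < 1 - K := by linarith
  unfold qq; positivity

lemma qq_smooth (K : ℝ) : ContDiff ℝ (⊤ : ℕ∞) (qq K) := by
  unfold qq
  exact contDiff_const.add (contDiff_const.mul (Real.contDiff_sinh.pow 2))

lemma coef_exists (s β : ℝ) {K : ℝ} (hK : K < 1) :
    ∃ M : ℝ, 1 ≤ M ∧ Coef (ca K) (cb s K) (cg s β K) ch1 (ch2 β K) s M := by
  have hS := Real.contDiff_sinh (n := ((⊤ : ℕ∞) : WithTop ℕ∞))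
  have hC := Real.contDiff_cosh (n := ((⊤ : ℕ∞) : WithTop ℕ∞))
  have hq := qq_smooth K
  have hq0 : ∀ y, qq K y ≠ 0 := fun y => (qq_pos hK y).ne'
  have sa : ContDiff ℝ (⊤ : ℕ∞) (ca K) := (contDiff_const.mul (hS.mul hC)).div hq hq0
  have sb : ContDiff ℝ (⊤ : ℕ∞) (cb s K) := contDiff_const.div hq hq0
  have sg : ContDiff ℝ (⊤ : ℕ∞) (cg s β K) := (contDiff_const.mul (hS.pow 2)).div hq hq0
  have sh1 : ContDiff ℝ (⊤ : ℕ∞) ch1 := hS.mul hC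
  have sh2 : ContDiff ℝ (⊤ : ℕ∞) (ch2 β K) :=
    (contDiff_const.mul ((hS.pow 3).mul hC)).div hq hq0
  have dq := smooth_d0 hq 0
  have g0 : deriv (cg s β K) 0 = 0 := by
    have h := ((((Real.hasDerivAt_sinh 0).pow 2).const_mul (s * β)).div dq (hq0 0)).deriv
    have e : deriv (cg s β K) 0 = _ := h
    rw [e]; simp
  have h20 : deriv (ch2 β K) 0 = 0 := by
    have h := (((((Real.hasDerivAt_sinh 0).pow 3).mul (Real.hasDerivAt_cosh 0)).const_mul
      (β * (1 - K))).div dq (hq0 0)).deriv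
    have e : deriv (ch2 β K) 0 = _ := h
    rw [e]; simp
  have b00 : cb s K 0 = s := by simp [cb, qq]
  have h1d : ∀ y, 1 ≤ deriv ch1 y := fun y => by
    have e : deriv ch1 y = _ := ((Real.hasDerivAt_sinh y).mul (Real.hasDerivAt_cosh y)).deriv
    rw [e]
    nlinarith [Real.cosh_sq y, sq_nonneg (Real.sinh y)]
  obtain ⟨m1, k1⟩ := bd_smooth (smooth_deriv sa)
  obtain ⟨m2, k2⟩ := bd_smooth (smooth_deriv (smooth_deriv sa))
  obtain ⟨m3, k3⟩ := bd_smooth_lin sb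
  obtain ⟨m4, k4⟩ := bd_smooth (smooth_deriv sb)
  obtain ⟨m5, k5⟩ := bd_smooth (smooth_deriv (smooth_deriv sb))
  obtain ⟨m6, k6⟩ := bd_smooth_lin (smooth_deriv sg)
  obtain ⟨m7, k7⟩ := bd_smooth (smooth_deriv (smooth_deriv sg))
  obtain ⟨m8, k8⟩ := bd_smooth (smooth_deriv sh1)
  obtain ⟨m9, k9⟩ := bd_smooth (smooth_deriv (smooth_deriv sh1))
  obtain ⟨m10, k10⟩ := bd_smooth_lin (smooth_deriv sh2)
  obtain ⟨m11, k11⟩ := bd_smooth (smooth_deriv (smooth_deriv sh2))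
  rw [b00] at k3
  simp only [g0, sub_zero] at k6
  simp only [h20, sub_zero] at k10
  set M := 1 + |m1| + |m2| + |m3| + |m4| + |m5| + |m6| + |m7| + |m8| + |m9| + |m10| + |m11| with hM
  have n1 := abs_nonneg m1
  have n2 := abs_nonneg m2
  have n3 := abs_nonneg m3
  have n4 := abs_nonneg m4
  have n5 := abs_nonneg m5
  have n6 := abs_nonneg m6
  have n7 := abs_nonneg m7
  have n8 := abs_nonneg m8
  have n9 := abs_nonneg m9
  have n10 := abs_nonneg m10
  have n11 := abs_nonneg m11
  refine ⟨M, by linarith, sa, sb, sg, sh1, sh2, ?_, ?_, ?_, ?_, ?_, ?_, ?_, ?_, h1d, ?_, ?_, ?_⟩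
  · exact fun y hy => (k1 y hy).trans (by linarith [le_abs_self m1])
  · exact fun y hy => (k2 y hy).trans (by linarith [le_abs_self m2])
  · exact fun y hy => (k3 y hy).trans
      (mul_le_mul_of_nonneg_right (by linarith [le_abs_self m3]) (abs_nonneg _))
  · exact fun y hy => (k4 y hy).trans (by linarith [le_abs_self m4])
  · exact fun y hy => (k5 y hy).trans (by linarith [le_abs_self m5])
  · exact fun y hy => (k6 y hy).trans
      (mul_le_mul_of_nonneg_right (by linarith [le_abs_self m6]) (abs_nonneg _))
  · exact fun y hy => (k7 y hy).trans (by linarith [le_abs_self m7])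
  · exact fun y hy => (k8 y hy).trans (by linarith [le_abs_self m8])
  · exact fun y hy => (k9 y hy).trans (by linarith [le_abs_self m9])
  · exact fun y hy => (k10 y hy).trans
      (mul_le_mul_of_nonneg_right (by linarith [le_abs_self m10]) (abs_nonneg _))
  · exact fun y hy => (k11 y hy).trans (by linarith [le_abs_self m11])

/-- Inverse hyperbolic tangent. -/
noncomputable def ath (v : ℝ) : ℝ := 1 / 2 * (Real.log (1 + v) - Real.log (1 - v))

lemma ath_deriv {v : ℝ} (hv : |v| ≤ 1 / 2) : HasDerivAt ath (1 / (1 - v ^ 2)) v := by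
  obtain ⟨h1, h2⟩ := abs_le.1 hv
  have p1 : 1 + v ≠ 0 := by linarith
  have p2 : 1 - v ≠ 0 := by linarith
  have d1 := ((hasDerivAt_id v).const_add 1).log p1
  have d2 := ((hasDerivAt_id v).const_sub 1).log p2
  refine ((d1.sub d2).const_mul (1 / 2)).congr_deriv ?_
  have : 1 - v ^ 2 = (1 + v) * (1 - v) := by ring
  simp only [id]
  rw [this]
  field_simp
  ring

lemma ath_abs {v : ℝ} (hv : |v| ≤ 1 / 2) : |ath v| ≤ 2 * |v| := by
  obtain ⟨h1, h2⟩ := abs_le.1 hv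
  have p1 : 0 < 1 + v := by linarith
  have p2 : 0 < 1 - v := by linarith
  have a1 := Real.log_le_sub_one_of_pos p1
  have a2 := Real.log_le_sub_one_of_pos p2
  have a3 := Real.one_sub_inv_le_log_of_pos p1
  have a4 := Real.one_sub_inv_le_log_of_pos p2
  have i1 : 1 - (1 + v)⁻¹ = v / (1 + v) := by field_simp; ring
  have i2 : 1 - (1 - v)⁻¹ = -(v / (1 - v)) := by field_simp; ring
  have j1 : |v / (1 + v)| ≤ 2 * |v| := by
    rw [abs_div, abs_of_pos p1, div_le_iff₀ p1]; nlinarith [abs_nonneg v]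
  have j2 : |v / (1 - v)| ≤ 2 * |v| := by
    rw [abs_div, abs_of_pos p2, div_le_iff₀ p2]; nlinarith [abs_nonneg v]
  rw [i1] at a3
  rw [i2] at a4
  have := abs_le.1 j1
  have := abs_le.1 j2
  have := le_abs_self v
  have := neg_abs_le v
  unfold ath
  rw [abs_le]
  constructor <;> linarith

lemma ath_hyp {v : ℝ} (hv : |v| ≤ 1 / 2) : Real.sinh (ath v) = v * Real.cosh (ath v) ∧
    Real.cosh (ath v) ^ 2 = 1 / (1 - v ^ 2) := by
  obtain ⟨h1, h2⟩ := abs_le.1 hv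
  have p1 : 0 < 1 + v := by linarith
  have p2 : 0 < 1 - v := by linarith
  have p3 : 0 < 1 - v ^ 2 := by nlinarith
  set e := Real.exp (ath v) with he
  have e0 : 0 < e := Real.exp_pos _
  have e2 : e ^ 2 = (1 + v) / (1 - v) := by
    rw [he, ← Real.exp_nat_mul]
    unfold ath
    rw [show ((2:ℕ):ℝ) * (1 / 2 * (Real.log (1 + v) - Real.log (1 - v)))
      = Real.log (1 + v) - Real.log (1 - v) by push_cast; ring, Real.exp_sub, Real.exp_log p1,
      Real.exp_log p2]
  have e3 : e ^ 2 * (1 - v) = 1 + v := by rw [e2]; field_simp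
  have hs : Real.sinh (ath v) = v * Real.cosh (ath v) := by
    rw [Real.sinh_eq, Real.cosh_eq, Real.exp_neg, ← he]
    field_simp
    linarith
  refine ⟨hs, ?_⟩
  have := Real.cosh_sq (ath v)
  rw [hs] at this
  rw [eq_div_iff p3.ne']
  linarith

lemma coef_vals {v s β K : ℝ} (hv : |v| ≤ 1 / 2) (hK0 : 0 < K) (hK : K < 1) :
    ca K (ath v) = (1 - K) * v / (1 - K * v ^ 2) ∧
    cb s K (ath v) = s * (1 - v ^ 2) / (1 - K * v ^ 2) ∧
    cg s β K (ath v) = s * β * v ^ 2 / (1 - K * v ^ 2) ∧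
    ch1 (ath v) = v / (1 - v ^ 2) ∧
    ch2 β K (ath v) = β * (1 - K) * v ^ 3 / ((1 - K * v ^ 2) * (1 - v ^ 2)) := by
  obtain ⟨hs, hc⟩ := ath_hyp hv
  obtain ⟨h1, h2⟩ := abs_le.1 hv
  have p3 : 0 < 1 - v ^ 2 := by nlinarith
  have p4 : 0 < 1 - K * v ^ 2 := by nlinarith
  have hsc : Real.sinh (ath v) * Real.cosh (ath v) = v / (1 - v ^ 2) := by
    rw [hs, mul_assoc, ← sq, hc]; ring
  have hss : Real.sinh (ath v) ^ 2 = v ^ 2 / (1 - v ^ 2) := by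
    rw [hs, mul_pow, hc]; ring
  have hq : qq K (ath v) = (1 - K * v ^ 2) / (1 - v ^ 2) := by
    unfold qq; rw [hss]; field_simp; ring
  have hs3 : Real.sinh (ath v) ^ 3 * Real.cosh (ath v) = v ^ 3 / (1 - v ^ 2) ^ 2 := by
    rw [show Real.sinh (ath v) ^ 3 * Real.cosh (ath v)
      = Real.sinh (ath v) ^ 2 * (Real.sinh (ath v) * Real.cosh (ath v)) by ring, hss, hsc]
    field_simp
  refine ⟨?_, ?_, ?_, ?_, ?_⟩
  · unfold ca; rw [hsc, hq]; field_simp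
  · unfold cb; rw [hq]; field_simp
  · unfold cg; rw [hss, hq]; field_simp
  · exact hsc
  · unfold ch2; rw [hs3, hq]; field_simp

lemma Sm.ath {T : ℝ} {v : ℝ → ℝ → ℝ} (sv : Sm T v)
    (hv : ∀ t ∈ Icc 1 T, ∀ x, |v t x| ≤ 1 / 2) : Sm T (fun t x => ath (v t x)) := by
  have h1 : ∀ p ∈ Icc 1 T ×ˢ (univ : Set ℝ), 1 + v p.1 p.2 ≠ 0 := fun p hp => by
    have := abs_le.1 (hv p.1 hp.1 p.2); linarith
  have h2 : ∀ p ∈ Icc 1 T ×ˢ (univ : Set ℝ), 1 - v p.1 p.2 ≠ 0 := fun p hp => by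
    have := abs_le.1 (hv p.1 hp.1 p.2); linarith
  exact contDiffOn_const.mul (((contDiffOn_const.add sv).log h1).sub
    ((contDiffOn_const.sub sv).log h2))

lemma ath_pX {T : ℝ} {v : ℝ → ℝ → ℝ} (sv : Sm T v)
    (hv : ∀ t ∈ Icc 1 T, ∀ x, |v t x| ≤ 1 / 2) {t : ℝ} (ht : t ∈ Icc 1 T) (x : ℝ) :
    pderivX (fun t x => ath (v t x)) t x = pderivX v t x / (1 - v t x ^ 2) := by
  have h := ((ath_deriv (hv t ht x)).comp x (sv.hasDerivAt_x ht x)).deriv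
  have e : pderivX (fun t x => ath (v t x)) t x = _ := h
  rw [e]; ring

lemma ath_pT {T : ℝ} {v : ℝ → ℝ → ℝ} (sv : Sm T v)
    (hv : ∀ t ∈ Icc 1 T, ∀ x, |v t x| ≤ 1 / 2) {t : ℝ} (ht : t ∈ Ioo 1 T) (x : ℝ) :
    pderivT (fun t x => ath (v t x)) t x = pderivT v t x / (1 - v t x ^ 2) := by
  have h := ((ath_deriv (hv t (Ioo_subset_Icc_self ht) x)).comp t (sv.hasDerivAt_t ht x)).deriv
  have e : pderivT (fun t x => ath (v t x)) t x = _ := h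
  rw [e]; ring

lemma ath_pXX {T : ℝ} (hT : 1 < T) {v : ℝ → ℝ → ℝ} (sv : Sm T v)
    (hv : ∀ t ∈ Icc 1 T, ∀ x, |v t x| ≤ 1 / 2) {t : ℝ} (ht : t ∈ Icc 1 T) (x : ℝ) :
    pderivX (pderivX (fun t x => ath (v t x))) t x = pderivX (pderivX v) t x / (1 - v t x ^ 2)
      + 2 * v t x * pderivX v t x ^ 2 / (1 - v t x ^ 2) ^ 2 := by
  have hne : 1 - v t x ^ 2 ≠ 0 := by
    have := abs_le.1 (hv t ht x); nlinarith
  have h := (((sv.pderivX hT).hasDerivAt_x ht x).div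
    (((sv.hasDerivAt_x ht x).pow 2).const_sub 1) hne).deriv
  have e : pderivX (pderivX (fun t x => ath (v t x))) t x
      = deriv (fun x => pderivX v t x / (1 - v t x ^ 2)) x := by
    change deriv (fun x => pderivX (fun t x => ath (v t x)) t x) x = _
    congr 1
    funext z
    exact ath_pX sv hv ht z
  rw [e]
  refine Eq.trans h ?_
  simp only [Pi.pow_apply]
  field_simp
  ring

/-- `∫ v_xx²`. -/
noncomputable def I2 (v : ℝ → ℝ → ℝ) (t : ℝ) : ℝ :=
  ∫ x in (0:ℝ)..(2 * Real.pi), pderivX (pderivX v) t x ^ 2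

lemma I2_nonneg (v : ℝ → ℝ → ℝ) (t : ℝ) : 0 ≤ I2 v t :=
  intervalIntegral.integral_nonneg Real.two_pi_pos.le fun x _ => by positivity

lemma I2_ath {T : ℝ} (hT : 1 < T) {v : ℝ → ℝ → ℝ} (sv : Sm T v)
    (pv : ∀ t x, v t (x + 2 * Real.pi) = v t x)
    (hv : ∀ t ∈ Icc 1 T, ∀ x, |v t x| ≤ 1 / 2) (hvx : ∀ t ∈ Icc 1 T, ∀ x, |pderivX v t x| ≤ 1 / 2)
    {t : ℝ} (ht : t ∈ Icc 1 T) :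
    I2 (fun t x => ath (v t x)) t ≤ 400 * I2 v t ∧ I2 v t ≤ 100 * I2 (fun t x => ath (v t x)) t := by
  have sy := sv.ath hv
  have py : ∀ t x, (fun t x => ath (v t x)) t (x + 2 * Real.pi) = (fun t x => ath (v t x)) t x :=
    fun t x => by simp only [pv]
  have hpi : (0:ℝ) ≤ 2 * Real.pi := Real.two_pi_pos.le
  have c1 := (sy.pderivX hT).cont_x ht
  have c2 := (sv.pderivX hT).cont_x ht
  have c3 := ((sy.pderivX hT).pderivX hT).cont_x ht
  have c4 := ((sv.pderivX hT).pderivX hT).cont_x ht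
  have i1 := int_sq_sm hT sy py ht
  have i2 := int_sq_sm hT sv pv ht
  change _ ≤ 49 * I2 (fun t x => ath (v t x)) t at i1
  change _ ≤ 49 * I2 v t at i2
  have key : ∀ w p P : ℝ, |w| ≤ 1 / 2 → |p| ≤ 1 / 2 →
      (P / (1 - w ^ 2) + 2 * w * p ^ 2 / (1 - w ^ 2) ^ 2) ^ 2 ≤ 4 * P ^ 2 + 7 * p ^ 2 ∧
      P ^ 2 ≤ 2 * (P / (1 - w ^ 2) + 2 * w * p ^ 2 / (1 - w ^ 2) ^ 2) ^ 2
        + 2 * (p / (1 - w ^ 2)) ^ 2 := by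
    intro w p P hw hp
    have hw2 : w ^ 2 ≤ 1 / 4 := by
      have := sq_le_sq' (abs_le.1 hw).1 (abs_le.1 hw).2; linarith
    have hp2 : p ^ 2 ≤ 1 / 4 := by
      have := sq_le_sq' (abs_le.1 hp).1 (abs_le.1 hp).2; linarith
    set d := 1 - w ^ 2 with hd
    have d0 : 0 < d := by linarith
    have d1 : d ≤ 1 := by linarith [sq_nonneg w]
    have d34 : 3 / 4 ≤ d := by linarith
    have dd : 9 / 16 ≤ d ^ 2 := by nlinarith
    constructor
    · have a1 : (P / d) ^ 2 ≤ 2 * P ^ 2 := by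
        rw [div_pow, div_le_iff₀ (by positivity)]
        nlinarith [sq_nonneg P]
      have a2 : (2 * w * p ^ 2 / d ^ 2) ^ 2 ≤ 7 / 2 * p ^ 2 := by
        rw [div_pow, div_le_iff₀ (by positivity)]
        have b1 : 81 / 256 ≤ (d ^ 2) ^ 2 := by nlinarith
        have b2 : (2 * w * p ^ 2) ^ 2 ≤ 1 / 4 * p ^ 2 := by
          have : (2 * w * p ^ 2) ^ 2 = 4 * (w ^ 2 * p ^ 2) * p ^ 2 := by ring
          rw [this]
          have : w ^ 2 * p ^ 2 ≤ 1 / 4 * (1 / 4) := by gcongr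
          nlinarith [sq_nonneg p]
        nlinarith [sq_nonneg p]
      nlinarith [sq_nonneg (P / d - 2 * w * p ^ 2 / d ^ 2)]
    · set Y := P / d + 2 * w * p ^ 2 / d ^ 2 with hY
      have hP : P = d * Y - 2 * w * p * (p / d) := by
        rw [hY]; field_simp; ring
      have b1 : (d * Y) ^ 2 ≤ Y ^ 2 := by
        rw [mul_pow]
        exact mul_le_of_le_one_left (sq_nonneg Y) (pow_le_one₀ d0.le d1)
      have b2 : (2 * w * p * (p / d)) ^ 2 ≤ (p / d) ^ 2 := by
        rw [mul_pow]
        have : (2 * w * p) ^ 2 ≤ 1 := by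
          have : (2 * w * p) ^ 2 = 4 * (w ^ 2 * p ^ 2) := by ring
          rw [this]
          have : w ^ 2 * p ^ 2 ≤ 1 / 4 * (1 / 4) := by gcongr
          linarith
        nlinarith [sq_nonneg (p / d)]
      rw [hP]
      nlinarith [sq_nonneg (d * Y + 2 * w * p * (p / d))]
  constructor
  · have : I2 (fun t x => ath (v t x)) t ≤ ∫ x in (0:ℝ)..(2 * Real.pi),
        (4 * pderivX (pderivX v) t x ^ 2 + 7 * pderivX v t x ^ 2) := by
      refine intervalIntegral.integral_mono_on hpi (Continuous.intervalIntegrable (by fun_prop) _ _)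
        (Continuous.intervalIntegrable (by fun_prop) _ _) ?_
      intro x _
      rw [ath_pXX hT sv hv ht x]
      exact (key _ _ _ (hv t ht x) (hvx t ht x)).1
    rw [intervalIntegral.integral_add (Continuous.intervalIntegrable (by fun_prop) _ _)
      (Continuous.intervalIntegrable (by fun_prop) _ _), intervalIntegral.integral_const_mul,
      intervalIntegral.integral_const_mul] at this
    change _ ≤ 4 * I2 v t + _ at this
    linarith [I2_nonneg v t]
  · have : I2 v t ≤ ∫ x in (0:ℝ)..(2 * Real.pi),
        (2 * pderivX (pderivX (fun t x => ath (v t x))) t x ^ 2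
          + 2 * pderivX (fun t x => ath (v t x)) t x ^ 2) := by
      refine intervalIntegral.integral_mono_on hpi (Continuous.intervalIntegrable (by fun_prop) _ _)
        (Continuous.intervalIntegrable (by fun_prop) _ _) ?_
      intro x _
      rw [ath_pXX hT sv hv ht x, ath_pX sv hv ht x]
      exact (key _ _ _ (hv t ht x) (hvx t ht x)).2
    rw [intervalIntegral.integral_add (Continuous.intervalIntegrable (by fun_prop) _ _)
      (Continuous.intervalIntegrable (by fun_prop) _ _), intervalIntegral.integral_const_mul,
      intervalIntegral.integral_const_mul] at this
    change _ ≤ 2 * I2 (fun t x => ath (v t x)) t + _ at this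
    linarith [I2_nonneg (fun t x => ath (v t x)) t]

lemma pX_const_mul (c : ℝ) (L : ℝ → ℝ → ℝ) :
    pderivX (fun t x => c * L t x) = fun t x => c * pderivX L t x := by
  funext t x
  unfold pderivX
  simp

lemma I2_const_mul (c : ℝ) (L : ℝ → ℝ → ℝ) (t : ℝ) :
    I2 (fun t x => c * L t x) t = c ^ 2 * I2 L t := by
  unfold I2
  rw [pX_const_mul, pX_const_mul]
  simp only [mul_pow]
  rw [intervalIntegral.integral_const_mul]

/-- Decay of the second derivatives for solutions of the Euler system. -/
theorem euler_energy {α K : ℝ} (hK0 : 0 < K) (hK3 : K < 1 / 3) (hα0 : 0 < α) (hα1 : α < 1)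
    (hstab : (1 - K) * α > 2 / 3) :
    ∃ C : ℝ, 0 < C ∧ ∀ T : ℝ, 1 < T → ∀ v L : ℝ → ℝ → ℝ, Sm T v → Sm T L →
      (∀ t x, v t (x + 2 * Real.pi) = v t x) → (∀ t x, L t (x + 2 * Real.pi) = L t x) →
      IsEulerSolution α K v L →
      (∀ t ∈ Icc 1 T, ∀ x, |v t x| ≤ 1 / 2 * t ^ (-(α * (1 - 3 * K) / 2))) →
      (∀ t ∈ Icc 1 T, ∀ x, |pderivX v t x| ≤ 1 / 2 * t ^ (-(α * (1 - 3 * K) / 2))) →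
      (∀ t ∈ Icc 1 T, ∀ x, |pderivX L t x| ≤ t ^ (-(α * (1 - 3 * K) / 2))) →
      ∀ t ∈ Icc 1 T, I2 v t + I2 L t ≤ C * (I2 v 1 + I2 L 1) * t ^ (-(α * (1 - 3 * K))) := by
  set β := α * (1 - 3 * K) with hβd
  have hβ : 0 < β := mul_pos hα0 (by linarith)
  have hβ1 : β ≤ 1 := by nlinarith
  have hγ : 1 < α + β / 2 := by simp only [hβd]; linarith
  set s := Real.sqrt K with hs
  have hs0 : 0 < s := Real.sqrt_pos.2 hK0
  have hsK : s ^ 2 = K := Real.sq_sqrt hK0.le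
  have hs1 : s ≤ 1 := by nlinarith
  set κ := s / (1 + K) with hκ
  have hκ0 : 0 < κ := by positivity
  have hκ1 : κ ≤ 1 := by rw [hκ, div_le_one (by linarith)]; linarith
  obtain ⟨M, hM, hc⟩ := coef_exists s β (K := K) (by linarith)
  obtain ⟨C, hC, hdec⟩ := energy_decay hα0 hα1 hβ hβ1 hγ hs0 hM
  refine ⟨(100 + 1 / κ ^ 2) * C * 400, by positivity, ?_⟩
  intro T hT v L sv sL pv pL hE bv bvx bL t ht
  have hle1 : ∀ t ∈ Icc 1 T, t ^ (-(β / 2)) ≤ 1 := fun t ht =>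
    Real.rpow_le_one_of_one_le_of_nonpos ht.1 (by linarith)
  have hv : ∀ t ∈ Icc 1 T, ∀ x, |v t x| ≤ 1 / 2 := fun t ht x =>
    (bv t ht x).trans (by linarith [hle1 t ht])
  have hvx : ∀ t ∈ Icc 1 T, ∀ x, |pderivX v t x| ≤ 1 / 2 := fun t ht x =>
    (bvx t ht x).trans (by linarith [hle1 t ht])
  have hv2 : ∀ t ∈ Icc 1 T, ∀ x, v t x ^ 2 ≤ 1 / 4 := fun t ht x => by
    have := sq_le_sq' (abs_le.1 (hv t ht x)).1 (abs_le.1 (hv t ht x)).2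
    linarith
  have sy := sv.ath hv
  have sl := sL.const_mul κ
  have hJ : ∀ t ∈ Icc 1 T, JJ (fun t x => ath (v t x)) (fun t x => κ * L t x) t
      = I2 (fun t x => ath (v t x)) t + κ ^ 2 * I2 L t := fun t ht => by
    rw [JJ_eq hT sy sl ht, ← I2_const_mul]; rfl
  have hd := hdec _ _ _ _ _ hc T hT (fun t x => ath (v t x)) (fun t x => κ * L t x) sy sl
    (fun t x => by simp only [pv]) (fun t x => by simp only [pL]) ?_ ?_ ?_ ?_ ?_ t ht
  · rw [hJ t ht, hJ 1 ⟨le_rfl, hT.le⟩] at hd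
    have q1 := (I2_ath hT sv pv hv hvx ht).2
    have q2 := (I2_ath hT sv pv hv hvx (t := 1) ⟨le_rfl, hT.le⟩).1
    have n1 := I2_nonneg (fun t x => ath (v t x)) t
    have n2 := I2_nonneg L t
    have n3 := I2_nonneg L 1
    have n4 := I2_nonneg v 1
    have hκ2 : κ ^ 2 ≤ 1 := pow_le_one₀ hκ0.le hκ1
    have ht0 : 0 < t := by linarith [ht.1]
    have hp : 0 ≤ t ^ (-β) := by positivity
    calc I2 v t + I2 L t ≤ 100 * I2 (fun t x => ath (v t x)) t + 1 / κ ^ 2 * (κ ^ 2 * I2 L t) := by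
          have : 1 / κ ^ 2 * (κ ^ 2 * I2 L t) = I2 L t := by field_simp
          rw [this]; linarith
      _ ≤ (100 + 1 / κ ^ 2) * (I2 (fun t x => ath (v t x)) t + κ ^ 2 * I2 L t) := by
          have : 0 ≤ 1 / κ ^ 2 * I2 (fun t x => ath (v t x)) t := by positivity
          have : 0 ≤ 100 * (κ ^ 2 * I2 L t) := by positivity
          linarith
      _ ≤ (100 + 1 / κ ^ 2) * (C * (I2 (fun t x => ath (v t x)) 1 + κ ^ 2 * I2 L 1) * t ^ (-β)) := by
          gcongr
      _ ≤ (100 + 1 / κ ^ 2) * (C * (400 * (I2 v 1 + I2 L 1)) * t ^ (-β)) := by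
          have : I2 (fun t x => ath (v t x)) 1 + κ ^ 2 * I2 L 1 ≤ 400 * (I2 v 1 + I2 L 1) := by
            nlinarith
          gcongr
      _ = _ := by ring
  · intro t ht x
    have htI := Ioo_subset_Icc_self ht
    obtain ⟨v1, v2, v3, v4, v5⟩ := coef_vals (s := s) (β := β) (hv t htI x) hK0 (by linarith)
    have p1 : 1 - v t x ^ 2 ≠ 0 := by linarith [hv2 t htI x]
    have p2 : 1 - K * v t x ^ 2 ≠ 0 := by nlinarith [hv2 t htI x]
    rw [ath_pT sv hv ht x, ath_pX sv hv htI x, pX_const_mul, (hE t ht.1.le x).1, v1, v2, v4, v5,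
      ← hβd, show α * (1 - K) * (1 - 3 * K) = β * (1 - K) by rw [hβd]; ring]
    simp only [hκ]
    rw [show K / (1 + K) = s ^ 2 / (1 + K) by rw [hsK]]
    have p3 : 1 + K ≠ 0 := by linarith
    have p4 : t ≠ 0 := by linarith [ht.1]
    generalize t ^ (-α) = τ
    field_simp
    ring
  · intro t ht x
    have htI := Ioo_subset_Icc_self ht
    obtain ⟨v1, v2, v3, v4, v5⟩ := coef_vals (s := s) (β := β) (hv t htI x) hK0 (by linarith)
    have p1 : 1 - v t x ^ 2 ≠ 0 := by linarith [hv2 t htI x]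
    have p2 : 1 - K * v t x ^ 2 ≠ 0 := by nlinarith [hv2 t htI x]
    have e : pderivT (fun t x => κ * L t x) t x = κ * pderivT L t x := by
      unfold pderivT; simp
    rw [e, ath_pX sv hv htI x, pX_const_mul, (hE t ht.1.le x).2, v1, v2, v3,
      show α * (1 + K) * (1 - 3 * K) = β * (1 + K) by rw [hβd]; ring]
    simp only [hκ]
    have p3 : 1 + K ≠ 0 := by linarith
    generalize t ^ (-α) = τ
    field_simp
    ring
  · intro t ht x
    exact (ath_abs (hv t ht x)).trans (by linarith [bv t ht x])
  · intro t ht x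
    rw [ath_pX sv hv ht x, abs_div]
    have d0 : 3 / 4 ≤ 1 - v t x ^ 2 := by linarith [hv2 t ht x]
    rw [abs_of_pos (by linarith : 0 < 1 - v t x ^ 2), div_le_iff₀ (by linarith)]
    have ht0 : 0 < t := by linarith [ht.1]
    have : 0 < t ^ (-(β / 2)) := by positivity
    nlinarith [bvx t ht x]
  · intro t ht x
    rw [pX_const_mul, abs_mul, abs_of_pos hκ0]
    nlinarith [bL t ht x, abs_nonneg (pderivX L t x)]

lemma abs_growth {w w' : ℝ → ℝ} {B γ T : ℝ} (hB : 0 ≤ B) (hγ : 1 < γ)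
    (hw : ContinuousOn w (Icc 1 T)) (dw : ∀ t ∈ Ioo 1 T, HasDerivAt w (w' t) t)
    (hb : ∀ t ∈ Ioo 1 T, |w' t| ≤ B * t ^ (-γ)) {t : ℝ} (ht : t ∈ Icc 1 T) :
    |w t| ≤ |w 1| + B / (γ - 1) := by
  have g0 : 0 < γ - 1 := by linarith
  set H : ℝ → ℝ := fun t => B / (γ - 1) * t ^ (1 - γ) with hH
  have dH : ∀ t, 1 ≤ t → HasDerivAt H (-(B * t ^ (-γ))) t := fun t ht => by
    have d2 := (Real.hasDerivAt_rpow_const (x := t) (p := 1 - γ) (Or.inl (by linarith))).const_mul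
      (B / (γ - 1))
    refine d2.congr_deriv ?_
    rw [show (1 - γ - 1) = -γ by ring]
    field_simp
    ring
  have cH : ContinuousOn H (Icc 1 T) := fun t ht => (dH t ht.1).continuousAt.continuousWithinAt
  have m1 : AntitoneOn (fun t => w t + H t) (Icc 1 T) := by
    refine antitoneOn_of_deriv_nonpos (convex_Icc 1 T) (hw.add cH) ?_ ?_
    · intro t ht
      rw [interior_Icc] at ht
      exact ((dw t ht).add (dH t ht.1.le)).differentiableAt.differentiableWithinAt
    · intro t ht
      rw [interior_Icc] at ht
      have e : deriv (fun t => w t + H t) t = _ := ((dw t ht).add (dH t ht.1.le)).deriv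
      rw [e]
      linarith [(abs_le.1 (hb t ht)).2]
  have m2 : MonotoneOn (fun t => w t - H t) (Icc 1 T) := by
    refine monotoneOn_of_deriv_nonneg (convex_Icc 1 T) (hw.sub cH) ?_ ?_
    · intro t ht
      rw [interior_Icc] at ht
      exact ((dw t ht).sub (dH t ht.1.le)).differentiableAt.differentiableWithinAt
    · intro t ht
      rw [interior_Icc] at ht
      have e : deriv (fun t => w t - H t) t = _ := ((dw t ht).sub (dH t ht.1.le)).deriv
      rw [e]
      linarith [(abs_le.1 (hb t ht)).1]
  have h1I : (1:ℝ) ∈ Icc 1 T := ⟨le_rfl, ht.1.trans ht.2⟩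
  have a1 := m1 h1I ht ht.1
  have a2 := m2 h1I ht ht.1
  have hH1 : H 1 = B / (γ - 1) := by simp [hH]
  have hHt : 0 ≤ H t := by
    have : 0 < t := by linarith [ht.1]
    simp only [hH]; positivity
  simp only [hH1] at a1 a2
  rw [abs_le]
  constructor
  · linarith [neg_abs_le (w 1)]
  · linarith [le_abs_self (w 1)]

theorem mean_bound {α K : ℝ} (hK0 : 0 < K) (hK3 : K < 1 / 3) (hα0 : 0 < α) (hα1 : α < 1)
    (hstab : (1 - K) * α > 2 / 3) :
    ∃ C : ℝ, 0 < C ∧ ∀ T : ℝ, 1 < T → ∀ v L : ℝ → ℝ → ℝ, Sm T v → Sm T L →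
      (∀ t x, v t (x + 2 * Real.pi) = v t x) → (∀ t x, L t (x + 2 * Real.pi) = L t x) →
      IsEulerSolution α K v L → ∀ N : ℝ, 0 ≤ N → N ≤ 1 / 2 →
      (∀ t ∈ Icc 1 T, ∀ x, |v t x| ≤ N * t ^ (-(α * (1 - 3 * K) / 2))) →
      (∀ t ∈ Icc 1 T, ∀ x, |pderivX L t x| ≤ N * t ^ (-(α * (1 - 3 * K) / 2))) →
      ∀ t ∈ Icc 1 T, |meanVel v t| ≤ (|meanVel v 1| + C * N ^ 3) * t ^ (-(α * (1 - 3 * K))) := by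
  set β := α * (1 - 3 * K) with hβd
  have hβ : 0 < β := mul_pos hα0 (by linarith)
  have hβ1 : β ≤ 1 := by nlinarith
  have hγ : 1 < α + β / 2 := by simp only [hβd]; linarith
  have hg0 : 0 < α + β / 2 - 1 := by linarith
  refine ⟨35 / (α + β / 2 - 1), by positivity, ?_⟩
  intro T hT v L sv sL pv pL hE N hN0 hN bv bL t ht
  have hpi : (0:ℝ) ≤ 2 * Real.pi := Real.two_pi_pos.le
  have hle1 : ∀ t ∈ Icc 1 T, t ^ (-(β / 2)) ≤ 1 := fun t ht =>
    Real.rpow_le_one_of_one_le_of_nonpos ht.1 (by linarith)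
  have hv2 : ∀ t ∈ Icc 1 T, ∀ x, v t x ^ 2 ≤ 1 / 4 := fun t ht x => by
    have h1 : |v t x| ≤ 1 / 2 := by
      refine (bv t ht x).trans ?_
      have := mul_le_mul_of_nonneg_left (hle1 t ht) hN0
      linarith
    have := sq_le_sq' (abs_le.1 h1).1 (abs_le.1 h1).2
    linarith
  have hD : ∀ t ∈ Icc 1 T, ∀ x, 11 / 12 ≤ 1 - K * v t x ^ 2 := fun t ht x => by
    have := mul_le_mul hK3.le (hv2 t ht x) (sq_nonneg _) (by norm_num)
    linarith
  set R : ℝ → ℝ → ℝ := fun t x =>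
    -(t ^ (-α) * (K / (1 + K)) * ((1 - (v t x) ^ 2) ^ 2 / (1 - K * (v t x) ^ 2) - 1) * pderivX L t x)
      + β * (1 - K) * (t ^ (-α) / (1 - K * (v t x) ^ 2)) * (v t x) ^ 3 with hR
  have cR : ∀ t ∈ Icc 1 T, Continuous (R t) := fun t ht => by
    have c1 := sv.cont_x ht
    have c2 := (sL.pderivX hT).cont_x ht
    have hne : ∀ x, 1 - K * v t x ^ 2 ≠ 0 := fun x => by linarith [hD t ht x]
    simp only [hR]
    fun_prop (disch := exact hne)
  have bR : ∀ t ∈ Icc 1 T, ∀ x, |R t x| ≤ 5 * (t ^ (-α) * (N * t ^ (-(β / 2))) ^ 3) := by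
    intro t ht x
    have ht0 : 0 < t := by linarith [ht.1]
    have d := hD t ht x
    have w2 := hv2 t ht x
    have b1 := bv t ht x
    have b2 := bL t ht x
    have hτ : 0 < t ^ (-α) := by positivity
    have hn : 0 ≤ N * t ^ (-(β / 2)) := by positivity
    simp only [hR]
    generalize t ^ (-α) = τ at *
    generalize N * t ^ (-(β / 2)) = n at *
    generalize v t x = w at *
    generalize pderivX L t x = q at *
    set D := 1 - K * w ^ 2 with hDd
    have hD0 : 0 < D := by linarith
    have e1 : |(1 - w ^ 2) ^ 2 / D - 1| ≤ 3 * n ^ 2 := by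
      have : (1 - w ^ 2) ^ 2 / D - 1 = w ^ 2 * ((w ^ 2 + K - 2) / D) := by
        have h3 : w ^ 2 * (w ^ 2 + K - 2) = (1 - w ^ 2) ^ 2 - D := by rw [hDd]; ring
        rw [← mul_div_assoc, h3, sub_div, div_self hD0.ne']
      rw [this, abs_mul, abs_of_nonneg (sq_nonneg w), abs_div, abs_of_pos hD0]
      have f1 : |w ^ 2 + K - 2| / D ≤ 3 := by
        rw [div_le_iff₀ hD0, abs_le]
        constructor <;> nlinarith [sq_nonneg w]
      have f2 : w ^ 2 ≤ n ^ 2 := by rw [← sq_abs w]; gcongr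
      calc _ ≤ n ^ 2 * 3 := by gcongr
        _ = _ := by ring
    have e2 : |K / (1 + K)| ≤ 1 := by
      rw [abs_of_pos (by positivity), div_le_one (by linarith)]; linarith
    have e3 : |τ * (K / (1 + K)) * ((1 - w ^ 2) ^ 2 / D - 1) * q| ≤ τ * 1 * (3 * n ^ 2) * n := by
      rw [abs_mul, abs_mul, abs_mul, abs_of_pos hτ]
      gcongr
    have e4 : |β * (1 - K) * (τ / D) * w ^ 3| ≤ 1 * 1 * (2 * τ) * n ^ 3 := by
      rw [abs_mul, abs_mul, abs_mul, abs_of_pos hβ, abs_of_pos (by linarith : 0 < 1 - K),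
        abs_of_pos (by positivity : 0 < τ / D), abs_pow]
      have : τ / D ≤ 2 * τ := by
        rw [div_le_iff₀ hD0]; nlinarith
      gcongr
      · linarith
      · linarith
    refine (abs_add_le _ _).trans ?_
    rw [abs_neg]
    nlinarith
  have cm : ContinuousOn (meanVel v) (Icc 1 T) := contOn_integral hT sv.contOn
  have dm : ∀ t ∈ Ioo 1 T, HasDerivAt (meanVel v)
      (-(β / t) * meanVel v t + ∫ x in (0:ℝ)..(2 * Real.pi), R t x) t := by
    intro t ht
    have htI := Ioo_subset_Icc_self ht
    have h := sv.hasDerivAt_integral ht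
    refine HasDerivAt.congr_deriv h ?_
    have c1 := sv.cont_x htI
    have c1' := (sv.pderivX hT).cont_x htI
    have c2 := (sL.pderivX hT).cont_x htI
    have hne : ∀ x, 1 - K * v t x ^ 2 ≠ 0 := fun x => by linarith [hD t htI x]
    have cRt := cR t htI
    have hfl := integral_flux (e := fun x => pderivT v t x)
      (φ := fun x => t ^ (-α) * ((1 - K) / (2 * K) * Real.log (1 - K * v t x ^ 2))
        - t ^ (-α) * (K / (1 + K)) * L t x)
      (φ' := fun x => t ^ (-α) * ((1 - K) / (2 * K) * (-(K * (2 * v t x * pderivX v t x)) /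
        (1 - K * v t x ^ 2))) - t ^ (-α) * (K / (1 + K)) * pderivX L t x)
      (R := fun x => -(β / t) * v t x + R t x) ?_ ?_ ?_ ?_ ?_
    · rw [hfl, intervalIntegral.integral_add (Continuous.intervalIntegrable (by fun_prop) _ _)
        (Continuous.intervalIntegrable (by fun_prop) _ _), intervalIntegral.integral_const_mul]
      rfl
    · intro x
      have d1 := (((sv.hasDerivAt_x htI x).pow 2).const_mul K).const_sub 1
      have d2 := ((d1.log (hne x)).const_mul ((1 - K) / (2 * K))).const_mul (t ^ (-α))
      have d3 := (sL.hasDerivAt_x htI x).const_mul (t ^ (-α) * (K / (1 + K)))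
      refine (d2.sub d3).congr_deriv ?_
      simp
    · fun_prop (disch := exact hne)
    · fun_prop
    · have e1 := pv t 0
      have e2 := pL t 0
      rw [zero_add] at e1 e2
      simp only [e1, e2]
    · intro x
      have := hne x
      rw [(hE t ht.1.le x).1]
      simp only [hR]
      rw [← hβd, show α * (1 - K) * (1 - 3 * K) = β * (1 - K) by rw [hβd]; ring]
      have : 1 + K ≠ 0 := by linarith
      have : t ≠ 0 := by linarith [ht.1]
      generalize t ^ (-α) = τ
      field_simp
      ring
  have key := abs_growth (w := fun t => t ^ β * meanVel v t) (B := 35 * N ^ 3)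
    (γ := α + β / 2) (T := T)
    (w' := fun t => t ^ β * ∫ x in (0:ℝ)..(2 * Real.pi), R t x) (by positivity) hγ
    (ContinuousOn.mul (fun t ht => (Real.continuousAt_rpow_const t β
      (Or.inr hβ.le)).continuousWithinAt) cm) ?_ ?_ ht
  · simp only [Real.one_rpow, one_mul] at key
    have ht0 : 0 < t := by linarith [ht.1]
    have hp : 0 < t ^ β := by positivity
    rw [abs_mul, abs_of_pos hp] at key
    rw [Real.rpow_neg ht0.le, ← div_eq_mul_inv, le_div_iff₀ hp]
    have : 35 / (α + β / 2 - 1) * N ^ 3 = 35 * N ^ 3 / (α + β / 2 - 1) := by ring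
    rw [this]
    linarith
  · intro t ht
    have ht0 : 0 < t := by linarith [ht.1]
    have d := (Real.hasDerivAt_rpow_const (x := t) (p := β) (Or.inl ht0.ne')).mul (dm t ht)
    refine d.congr_deriv ?_
    rw [Real.rpow_sub_one ht0.ne']
    field_simp
    ring
  · intro t ht
    have htI := Ioo_subset_Icc_self ht
    have ht0 : 0 < t := by linarith [ht.1]
    have h1 : |∫ x in (0:ℝ)..(2 * Real.pi), R t x| ≤
        5 * (t ^ (-α) * (N * t ^ (-(β / 2))) ^ 3) * |2 * Real.pi - 0| := by
      rw [← Real.norm_eq_abs]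
      exact intervalIntegral.norm_integral_le_of_norm_le_const (fun x _ => bR t htI x)
    rw [sub_zero, abs_of_nonneg hpi] at h1
    have h2 : |∫ x in (0:ℝ)..(2 * Real.pi), R t x| ≤
        5 * (t ^ (-α) * (N * t ^ (-(β / 2))) ^ 3) * 7 :=
      h1.trans (mul_le_mul_of_nonneg_left two_pi_lt.le (by positivity))
    rw [abs_mul, abs_of_pos (by positivity : 0 < t ^ β)]
    refine (mul_le_mul_of_nonneg_left h2 (by positivity : 0 ≤ t ^ β)).trans (le_of_eq ?_)
    have e : t ^ (-(α + β / 2)) = t ^ β * (t ^ (-α) * (t ^ (-(β / 2))) ^ 3) := by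
      rw [← Real.rpow_natCast, ← Real.rpow_mul ht0.le, ← Real.rpow_add ht0, ← Real.rpow_add ht0]
      congr 1
      push_cast
      ring
    rw [e]
    ring

lemma continuity_arg {f : ℝ → ℝ} {c : ℝ} (hf : ContinuousOn f (Ici 1)) (h1 : f 1 < c)
    (hs : ∀ T, 1 < T → (∀ t ∈ Icc 1 T, f t ≤ c) → f T < c) {t : ℝ} (ht : 1 ≤ t) : f t ≤ c := by
  by_contra hcon
  push Not at hcon
  have hfc : ContinuousOn f (Icc 1 t) := hf.mono Icc_subset_Ici_self
  have hS : IsCompact (Icc 1 t ∩ f ⁻¹' (Ici c)) := by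
    have := hfc.preimage_isClosed_of_isClosed isClosed_Icc (isClosed_Ici (a := c))
    exact isCompact_Icc.of_isClosed_subset this inter_subset_left
  obtain ⟨T, hT, hleast⟩ := hS.exists_isLeast ⟨t, ⟨ht, le_rfl⟩, hcon.le⟩
  have hTc : c ≤ f T := hT.2
  have hT1 : 1 < T := by
    refine lt_of_le_of_ne hT.1.1 ?_
    rintro rfl
    linarith
  have hlt : ∀ r ∈ Icc 1 T, r < T → f r < c := fun r hr hrT => by
    by_contra hh
    push Not at hh
    have := hleast ⟨⟨hr.1, hr.2.trans hT.1.2⟩, hh⟩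
    linarith
  obtain ⟨r, hr, hrc⟩ := intermediate_value_Icc hT1.le
    (hfc.mono (Icc_subset_Icc_right hT.1.2)) ⟨h1.le, hTc⟩
  have hrT : r = T := by
    by_contra hne
    have := hlt r hr (lt_of_le_of_ne hr.2 hne)
    linarith
  subst hrT
  have := hs r hT1 (fun q hq => by
    rcases eq_or_lt_of_le hq.2 with h | h
    · rw [h, hrc]
    · exact (hlt q hq h).le)
  linarith

lemma abs_le_of_sq_le' {p n : ℝ} (hn : 0 ≤ n) (h : p ^ 2 ≤ n ^ 2) : |p| ≤ n :=
  abs_le_of_sq_le_sq h hn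

set_option maxHeartbeats 1000000 in
theorem main_aux (α K : ℝ) (hK0 : 0 < K) (hK3 : K < 1 / 3) (hα0 : 0 < α) (hα1 : α < 1)
    (hstab : (1 - K) * α > 2 / 3) :
    ∃ ε > 0, ∃ C > 0, ∀ v L : ℝ → ℝ → ℝ,
      ContDiffOn ℝ (⊤ : ℕ∞) (fun p : ℝ × ℝ => v p.1 p.2) (Set.Ici 1 ×ˢ Set.univ) →
      ContDiffOn ℝ (⊤ : ℕ∞) (fun p : ℝ × ℝ => L p.1 p.2) (Set.Ici 1 ×ˢ Set.univ) →
      (∀ t x, v t (x + 2 * Real.pi) = v t x) →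
      (∀ t x, L t (x + 2 * Real.pi) = L t x) →
      IsEulerSolution α K v L →
      |meanVel v 1| + sobolevNorm2 v L 1 < ε →
      ∀ t, 1 ≤ t → |meanVel v t| ≤ C * t ^ (-(α * (1 - 3 * K))) := by
  obtain ⟨CE, hCE, hEn⟩ := euler_energy hK0 hK3 hα0 hα1 hstab
  obtain ⟨Cm, hCm, hMn⟩ := mean_bound hK0 hK3 hα0 hα1 hstab
  set β := α * (1 - 3 * K) with hβd
  have hβ : 0 < β := mul_pos hα0 (by linarith)
  set η : ℝ := 1 / (44 + 4 * 22 ^ 3 * Cm) with hη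
  have hη0 : 0 < η := by positivity
  have hη1 : η * (44 + 4 * 22 ^ 3 * Cm) = 1 := by rw [hη]; field_simp
  have hη44 : 44 * η ≤ 1 := by nlinarith [mul_pos hη0 hCm]
  have hηC : 4 * (Cm * (22 * η) ^ 3) ≤ η := by
    have e1 : η * (4 * 22 ^ 3 * Cm) ≤ 1 := by nlinarith
    have e2 : 4 * (Cm * (22 * η) ^ 3) = (η * (4 * 22 ^ 3 * Cm)) * (η * η) := by ring
    rw [e2]
    have e3 : η * η ≤ η := by nlinarith
    nlinarith [mul_pos hη0 hη0]
  set ε : ℝ := η / (4 * (1 + CE)) with hε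
  have hε0 : 0 < ε := by positivity
  have hε1 : ε * (4 * (1 + CE)) = η := by rw [hε]; field_simp
  have hε2 : 4 * ε ≤ η := by nlinarith [mul_pos hε0 hCE]
  have hε3 : CE * (2 * ε ^ 2) ≤ η ^ 2 / 4 := by
    have : 4 * (CE * ε) ≤ η := by nlinarith
    nlinarith [mul_pos hε0 hCE]
  refine ⟨ε, hε0, η, hη0, ?_⟩
  intro v L hv hL pv pL hE hdata
  have sv : ∀ T, Sm T v := fun T => hv.mono (prod_mono Icc_subset_Ici_self subset_rfl)
  have sL : ∀ T, Sm T L := fun T => hL.mono (prod_mono Icc_subset_Ici_self subset_rfl)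
  have i0 : |meanVel v 1| < ε ∧ I2 v 1 ≤ ε ^ 2 ∧ I2 L 1 ≤ ε ^ 2 := by
    have e : sobolevNorm2 v L 1 = L2normCirc (fun x => deriv (v 1) x) + Real.sqrt (I2 v 1)
        + L2normCirc (fun x => deriv (L 1) x) + Real.sqrt (I2 L 1) := rfl
    have n1 : 0 ≤ L2normCirc (fun x => deriv (v 1) x) := Real.sqrt_nonneg _
    have n2 : 0 ≤ L2normCirc (fun x => deriv (L 1) x) := Real.sqrt_nonneg _
    have n3 := Real.sqrt_nonneg (I2 v 1)
    have n4 := Real.sqrt_nonneg (I2 L 1)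
    have n5 := abs_nonneg (meanVel v 1)
    rw [e] at hdata
    refine ⟨by linarith, ?_, ?_⟩
    · exact (Real.sqrt_le_left hε0.le).1 (by linarith)
    · exact (Real.sqrt_le_left hε0.le).1 (by linarith)
  obtain ⟨im, iv, iL⟩ := i0
  set f : ℝ → ℝ := fun t => t ^ β * (meanVel v t ^ 2 + I2 v t + I2 L t) with hf
  have cf : ContinuousOn f (Ici 1) := by
    intro t ht
    have hT : 1 < t + 1 := by linarith [mem_Ici.1 ht]
    have c : ContinuousOn f (Icc 1 (t + 1)) := by
      refine ContinuousOn.mul (fun t ht => (Real.continuousAt_rpow_const t β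
        (Or.inr hβ.le)).continuousWithinAt) ?_
      refine ContinuousOn.add (ContinuousOn.add (ContinuousOn.pow ?_ 2) ?_) ?_
      · exact contOn_integral hT (sv _).contOn
      · exact contOn_integral hT ((((sv _).pderivX hT).pderivX hT).contOn.pow 2)
      · exact contOn_integral hT ((((sL _).pderivX hT).pderivX hT).contOn.pow 2)
    refine (c t ⟨ht, by linarith⟩).mono_of_mem_nhdsWithin ?_
    rw [← Ici_inter_Iic]
    exact inter_mem self_mem_nhdsWithin (mem_nhdsWithin_of_mem_nhds (Iic_mem_nhds (by linarith)))
  have cons : ∀ T, 1 < T → (∀ t ∈ Icc 1 T, f t ≤ η ^ 2) → ∀ t ∈ Icc 1 T,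
      |meanVel v t| ≤ η / 2 * t ^ (-β) ∧ f t < η ^ 2 := by
    intro T hT hb
    have bb : ∀ t ∈ Icc 1 T, meanVel v t ^ 2 + I2 v t + I2 L t ≤ (η * t ^ (-(β / 2))) ^ 2 := by
      intro t ht
      have ht0 : 0 < t := by linarith [ht.1]
      have h := hb t ht
      simp only [hf] at h
      rw [mul_pow, ← Real.rpow_natCast (t ^ (-(β / 2))), ← Real.rpow_mul ht0.le,
        show -(β / 2) * ((2:ℕ):ℝ) = -β by push_cast; ring, Real.rpow_neg ht0.le,
        ← div_eq_mul_inv, le_div_iff₀ (by positivity)]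
      linarith
    have nn : ∀ t ∈ Icc 1 T, 0 ≤ η * t ^ (-(β / 2)) := fun t ht => by
      have ht0 : 0 < t := by linarith [ht.1]
      positivity
    have bvx : ∀ t ∈ Icc 1 T, ∀ x, |pderivX v t x| ≤ 3 * (η * t ^ (-(β / 2))) := by
      intro t ht x
      refine abs_le_of_sq_le' (by linarith [nn t ht]) ?_
      have h1 := sup_sq_sm hT (sv T) pv ht x
      change _ ≤ 7 * I2 v t at h1
      nlinarith [bb t ht, I2_nonneg L t, sq_nonneg (meanVel v t), I2_nonneg v t]
    have bLx : ∀ t ∈ Icc 1 T, ∀ x, |pderivX L t x| ≤ 3 * (η * t ^ (-(β / 2))) := by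
      intro t ht x
      refine abs_le_of_sq_le' (by linarith [nn t ht]) ?_
      have h1 := sup_sq_sm hT (sL T) pL ht x
      change _ ≤ 7 * I2 L t at h1
      nlinarith [bb t ht, I2_nonneg L t, sq_nonneg (meanVel v t), I2_nonneg v t]
    have bv : ∀ t ∈ Icc 1 T, ∀ x, |v t x| ≤ 22 * (η * t ^ (-(β / 2))) := by
      intro t ht x
      have h1 := sup_le_mean (fun x => (sv T).hasDerivAt_x ht x) (fun x => pv t x) (bvx t ht) x
      have h2 : |meanVel v t| ≤ η * t ^ (-(β / 2)) := by
        refine abs_le_of_sq_le' (nn t ht) ?_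
        linarith [bb t ht, I2_nonneg L t, I2_nonneg v t]
      change _ ≤ |meanVel v t| + _ at h1
      linarith
    have k1 : ∀ t ∈ Icc 1 T, 22 * (η * t ^ (-(β / 2))) ≤ 1 / 2 * t ^ (-(β / 2)) := fun t ht => by
      have ht0 : 0 < t := by linarith [ht.1]
      have : 0 < t ^ (-(β / 2)) := by positivity
      nlinarith
    have hen := hEn T hT v L (sv T) (sL T) pv pL hE
      (fun t ht x => (bv t ht x).trans (k1 t ht))
      (fun t ht x => (bvx t ht x).trans (by linarith [k1 t ht, nn t ht]))
      (fun t ht x => (bLx t ht x).trans (by linarith [k1 t ht, nn t ht]))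
    have hmn := hMn T hT v L (sv T) (sL T) pv pL hE (22 * η) (by positivity) (by linarith)
      (fun t ht x => (bv t ht x).trans (by linarith))
      (fun t ht x => (bLx t ht x).trans (by linarith [nn t ht]))
    intro t ht
    have ht0 : 0 < t := by linarith [ht.1]
    have hp : 0 < t ^ (-β) := by positivity
    have hp1 : t ^ (-β) ≤ 1 := Real.rpow_le_one_of_one_le_of_nonpos ht.1 (by linarith)
    have hpp : t ^ β * t ^ (-β) = 1 := by rw [← Real.rpow_add ht0]; simp
    have hpb : 0 < t ^ β := by positivity
    have q1 : |meanVel v t| ≤ η / 2 * t ^ (-β) :=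
      (hmn t ht).trans (mul_le_mul_of_nonneg_right (by linarith) hp.le)
    refine ⟨q1, ?_⟩
    have q2 : I2 v t + I2 L t ≤ η ^ 2 / 4 * t ^ (-β) := by
      refine (hen t ht).trans (mul_le_mul_of_nonneg_right ?_ hp.le)
      have := mul_le_mul_of_nonneg_left (show I2 v 1 + I2 L 1 ≤ 2 * ε ^ 2 by linarith) hCE.le
      linarith
    have q3 : meanVel v t ^ 2 ≤ η ^ 2 / 4 * t ^ (-β) := by
      rw [← sq_abs]
      have a1 : |meanVel v t| ^ 2 ≤ (η / 2 * t ^ (-β)) ^ 2 := by gcongr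
      have a2 : (η / 2 * t ^ (-β)) ^ 2 = η ^ 2 / 4 * (t ^ (-β) * t ^ (-β)) := by ring
      have a3 : t ^ (-β) * t ^ (-β) ≤ t ^ (-β) := mul_le_of_le_one_left hp.le hp1
      have a4 := mul_le_mul_of_nonneg_left a3 (by positivity : 0 ≤ η ^ 2 / 4)
      linarith
    have q4 : f t ≤ t ^ β * (η ^ 2 / 2 * t ^ (-β)) := by
      simp only [hf]
      refine mul_le_mul_of_nonneg_left ?_ hpb.le
      linarith
    have q5 : t ^ β * (η ^ 2 / 2 * t ^ (-β)) = η ^ 2 / 2 := by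
      rw [mul_left_comm, hpp, mul_one]
    have : 0 < η ^ 2 := by positivity
    linarith
  have f1 : f 1 < η ^ 2 := by
    have a1 : meanVel v 1 ^ 2 ≤ ε ^ 2 := by
      rw [← sq_abs]; gcongr
    simp only [hf, Real.one_rpow, one_mul]
    nlinarith
  have fall : ∀ t, 1 ≤ t → f t ≤ η ^ 2 := fun t ht =>
    continuity_arg cf f1 (fun T hT hb => (cons T hT hb T ⟨hT.le, le_rfl⟩).2) ht
  intro t ht
  have h := (cons (t + 1) (by linarith) (fun r hr => fall r hr.1) t ⟨ht, by linarith⟩).1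
  have ht0 : 0 < t := by linarith
  have hp : 0 < t ^ (-β) := by positivity
  nlinarith

end Helpers

/-- In the stable regime `(1−K)α > 2/3`, `0 < K < 1/3`, small perturbations of the quiet
fluid have mean velocity decaying at the rate `t^(−α(1−3K)+δ)`. -/
theorem stability_decay_mean_velocity
    (α K : ℝ) (hK0 : 0 < K) (hK3 : K < 1 / 3) (hα0 : 0 < α) (hα1 : α < 1)
    (hstab : (1 - K) * α > 2 / 3) (δ : ℝ) (hδ : 0 < δ) :
    ∃ ε > 0, ∃ C > 0, ∀ v L : ℝ → ℝ → ℝ,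
      ContDiffOn ℝ (⊤ : ℕ∞) (fun p : ℝ × ℝ => v p.1 p.2) (Set.Ici 1 ×ˢ Set.univ) →
      ContDiffOn ℝ (⊤ : ℕ∞) (fun p : ℝ × ℝ => L p.1 p.2) (Set.Ici 1 ×ˢ Set.univ) →
      (∀ t x, v t (x + 2 * Real.pi) = v t x) →
      (∀ t x, L t (x + 2 * Real.pi) = L t x) →
      IsEulerSolution α K v L →
      |meanVel v 1| + sobolevNorm2 v L 1 < ε →
      ∀ t, 1 ≤ t → |meanVel v t| ≤ C * t ^ (-(α * (1 - 3 * K)) + δ) := by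
  obtain ⟨ε, hε, C, hC, h⟩ := main_aux α K hK0 hK3 hα0 hα1 hstab
  refine ⟨ε, hε, C, hC, ?_⟩
  intro v L hv hL pv pL hE hi t ht
  refine (h v L hv hL pv pL hE hi t ht).trans ?_
  refine mul_le_mul_of_nonneg_left ?_ hC.le
  exact Real.rpow_le_rpow_of_exponent_le ht (by linarith)
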